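/- arXiv:0805.3522 — 4 statements merged into one kernel-verified Lean document; each statement's English description precedes it below -/
import Mathlib

section
/- Let S and T be finite subsets of an abelian group G with 0 ∈ S ∩ T, |S| ≥ 2, S + T aperiodic, and |S + T| = |S| + |T| - 1. If T is not contained in the subgroup M = ⟨S⟩ generated by S, then T is M-quasi-periodic: that is, there exists x ∈ G such that (T \ (x + M)) + M = T \ (x + M). -/
open scoped Pointwise

/-- A finite set is aperiodic if its period `{g : A + g = A}` is trivial. -/
def IsAperiodic {G : Type*} [AddCommGroup G] [DecidableEq G] (A : Finset G) : Prop :=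
  ∀ g : G, A + ({g} : Finset G) = A → g = 0

/-- `A` is `H`-quasi-periodic: there is `x` with `(A \ (x + H)) + H = A \ (x + H)`. -/
def QuasiPeriodic {G : Type*} [AddCommGroup G] (H A : Set G) : Prop :=
  ∃ x : G, (A \ ({x} + H)) + H = A \ ({x} + H)


section Kneser
variable {G : Type*} [AddCommGroup G] [DecidableEq G]

/-- The period of a nonempty finite set, as a finset. -/
def stb (C : Finset G) : Finset G := (C - C).filter (fun g => ∀ x ∈ C, g + x ∈ C)

lemma mem_stb_of {C : Finset G} (hC : C.Nonempty) {g : G} (h : ∀ x ∈ C, g + x ∈ C) :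
    g ∈ stb C := by
  obtain ⟨x, hx⟩ := hC
  refine Finset.mem_filter.2 ⟨?_, h⟩
  exact Finset.mem_sub.2 ⟨g + x, h x hx, x, hx, by abel⟩

lemma stb_add_mem {C : Finset G} {g x : G} (hg : g ∈ stb C) : g + x ∈ C ↔ x ∈ C := by
  have h := (Finset.mem_filter.1 hg).2
  refine ⟨fun hx => ?_, h x⟩
  have himg : C.image (fun y => g + y) = C := by
    apply Finset.eq_of_subset_of_card_le
    · intro y hy
      obtain ⟨z, hz, rfl⟩ := Finset.mem_image.1 hy
      exact h z hz
    · rw [Finset.card_image_of_injective _ (add_right_injective g)]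
  rw [← himg] at hx
  obtain ⟨z, hz, hzx⟩ := Finset.mem_image.1 hx
  rwa [← add_left_cancel hzx]

lemma zero_mem_stb {C : Finset G} (hC : C.Nonempty) : (0 : G) ∈ stb C :=
  mem_stb_of hC (by simp)

lemma neg_mem_stb {C : Finset G} (hC : C.Nonempty) {g : G} (hg : g ∈ stb C) : -g ∈ stb C :=
  mem_stb_of hC fun x hx => by
    rw [← stb_add_mem hg]; simpa using hx

lemma add_mem_stb {C : Finset G} (hC : C.Nonempty) {g h : G} (hg : g ∈ stb C) (hh : h ∈ stb C) :
    g + h ∈ stb C :=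
  mem_stb_of hC fun x hx => by
    rw [add_assoc, stb_add_mem hg, stb_add_mem hh]; exact hx

/-- Two translates in two directions: the sum set of two nonempty sets is large. -/
lemma card_cross {D P Q : Finset G} (hP : P.Nonempty) (hQ : Q.Nonempty)
    (hD : ∀ p ∈ P, ∀ p' ∈ P, ∀ q ∈ Q, ∀ q' ∈ Q, p - p' = q - q' → p - p' ∈ D) :
    P.card + Q.card ≤ (P + Q).card + D.card := by
  obtain ⟨p0, hp0⟩ := hP
  obtain ⟨q0, hq0⟩ := hQ
  have h1 : (P.image (· + q0)) ∪ (Q.image (p0 + ·)) ⊆ P + Q := by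
    intro x hx
    rcases Finset.mem_union.1 hx with hx | hx
    · obtain ⟨p, hp, rfl⟩ := Finset.mem_image.1 hx
      exact Finset.add_mem_add hp hq0
    · obtain ⟨p, hp, rfl⟩ := Finset.mem_image.1 hx
      exact Finset.add_mem_add hp0 hp
  have h2 : ((P.image (· + q0)) ∩ (Q.image (p0 + ·))).card ≤ D.card := by
    apply Finset.card_le_card_of_injOn (fun x => x - q0 - p0)
    · intro x hx
      obtain ⟨hx1, hx2⟩ := Finset.mem_inter.1 (Finset.mem_coe.1 hx)
      obtain ⟨p, hp, hpx⟩ := Finset.mem_image.1 hx1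
      obtain ⟨q, hq, hqx⟩ := Finset.mem_image.1 hx2
      have e1 : p - p0 = x - q0 - p0 := by rw [← hpx]; abel
      have e2 : q - q0 = x - q0 - p0 := by rw [← hqx]; abel
      have := hD p hp p0 hp0 q hq q0 hq0 (e1.trans e2.symm)
      rw [e1] at this
      exact this
    · intro x _ y _ hxy
      simpa using hxy
  have h3 := Finset.card_union_add_card_inter (P.image (· + q0)) (Q.image (p0 + ·))
  rw [Finset.card_image_of_injective _ (add_left_injective q0),
    Finset.card_image_of_injective _ (add_right_injective p0)] at h3
  have := Finset.card_le_card h1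
  omega

lemma lemA {C₁ C₂ : Finset G} (h1 : C₁.Nonempty) (h2 : C₂.Nonempty) {c : G}
    (hc2 : c ∈ C₂) (hc1 : c ∉ C₁) :
    (stb C₁).card ≤ (C₂ \ C₁).card + (stb C₁ ∩ stb C₂).card ∨
    (stb C₂).card ≤ (C₁ \ C₂).card + (stb C₁ ∩ stb C₂).card ∨
    (stb C₂).card ≤ (C₂ \ C₁).card := by
  set P := (stb C₁).filter (fun h => h + c ∈ C₂) with hP
  set P' := (stb C₁).filter (fun h => ¬ h + c ∈ C₂) with hP'
  set Q := (stb C₂).filter (fun h => ¬ h + c ∈ C₁) with hQ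
  set Q' := (stb C₂).filter (fun h => ¬ ¬ h + c ∈ C₁) with hQ'
  have cP : P.card + P'.card = (stb C₁).card := Finset.card_filter_add_card_filter_not _
  have cQ : Q.card + Q'.card = (stb C₂).card := Finset.card_filter_add_card_filter_not _
  have key : ∀ X ⊆ stb C₁, ∀ Y ⊆ stb C₂, X.Nonempty → Y.Nonempty →
      X.card + Y.card ≤ (X + Y).card + (stb C₁ ∩ stb C₂).card := by
    intro X hX Y hY hXn hYn
    apply card_cross hXn hYn
    intro p hp p' hp' q hq q' hq' e
    refine Finset.mem_inter.2 ⟨?_, ?_⟩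
    · rw [sub_eq_add_neg]; exact add_mem_stb h1 (hX hp) (neg_mem_stb h1 (hX hp'))
    · rw [e, sub_eq_add_neg]; exact add_mem_stb h2 (hY hq) (neg_mem_stb h2 (hY hq'))
  have i1 : (P + Q).card ≤ (C₂ \ C₁).card := by
    apply Finset.card_le_card_of_injOn (fun x => x + c)
    · intro x hx
      obtain ⟨p, hp, q, hq, rfl⟩ := Finset.mem_add.1 (Finset.mem_coe.1 hx)
      obtain ⟨hp1, hp2⟩ := Finset.mem_filter.1 hp
      obtain ⟨hq1, hq2⟩ := Finset.mem_filter.1 hq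
      refine Finset.mem_coe.2 (Finset.mem_sdiff.2 ⟨?_, ?_⟩)
      · show p + q + c ∈ C₂
        rw [add_comm p q, add_assoc, stb_add_mem hq1]; exact hp2
      · show p + q + c ∉ C₁
        rw [add_assoc, stb_add_mem hp1]; exact hq2
    · intro x _ y _ h; simpa using h
  have i2 : (P' + Q').card ≤ (C₁ \ C₂).card := by
    apply Finset.card_le_card_of_injOn (fun x => x + c)
    · intro x hx
      obtain ⟨p, hp, q, hq, rfl⟩ := Finset.mem_add.1 (Finset.mem_coe.1 hx)
      obtain ⟨hp1, hp2⟩ := Finset.mem_filter.1 hp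
      obtain ⟨hq1, hq2⟩ := Finset.mem_filter.1 hq
      refine Finset.mem_coe.2 (Finset.mem_sdiff.2 ⟨?_, ?_⟩)
      · show p + q + c ∈ C₁
        rw [add_assoc, stb_add_mem hp1]; exact not_not.1 hq2
      · show p + q + c ∉ C₂
        rw [add_comm p q, add_assoc, stb_add_mem hq1]; exact hp2
    · intro x _ y _ h; simpa using h
  have zP : (0 : G) ∈ P := Finset.mem_filter.2 ⟨zero_mem_stb h1, by simpa using hc2⟩
  have zQ : (0 : G) ∈ Q := Finset.mem_filter.2 ⟨zero_mem_stb h2, by simpa using hc1⟩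
  have k1 := key P (Finset.filter_subset _ _) Q (Finset.filter_subset _ _) ⟨0, zP⟩ ⟨0, zQ⟩
  have lP : P.card ≤ (P + Q).card :=
    Finset.card_le_card fun x hx => Finset.mem_add.2 ⟨x, hx, 0, zQ, add_zero x⟩
  have lQ : Q.card ≤ (P + Q).card :=
    Finset.card_le_card fun x hx => Finset.mem_add.2 ⟨0, zP, x, hx, zero_add x⟩
  rcases P'.eq_empty_or_nonempty with e | nP
  · have : P'.card = 0 := by rw [e]; rfl
    omega
  rcases Q'.eq_empty_or_nonempty with e | nQ
  · have : Q'.card = 0 := by rw [e]; rfl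
    omega
  have k2 := key P' (Finset.filter_subset _ _) Q' (Finset.filter_subset _ _) nP nQ
  omega

lemma lemB {C₁ C₂ : Finset G} (h1 : C₁.Nonempty) (h2 : C₂.Nonempty) {n : ℕ}
    (n1 : n ≤ C₁.card + (stb C₁).card) (n2 : n ≤ C₂.card + (stb C₂).card) :
    n ≤ (C₁ ∪ C₂).card + (stb (C₁ ∪ C₂)).card := by
  by_cases s21 : C₂ ⊆ C₁
  · rwa [Finset.union_eq_left.2 s21]
  by_cases s12 : C₁ ⊆ C₂
  · rwa [Finset.union_eq_right.2 s12]
  obtain ⟨c, hc2, hc1⟩ := Finset.not_subset.1 s21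
  obtain ⟨d, hd1, hd2⟩ := Finset.not_subset.1 s12
  have a := lemA h1 h2 hc2 hc1
  have b := lemA h2 h1 hd1 hd2
  rw [Finset.inter_comm (stb C₂)] at b
  have hs : (stb C₁ ∩ stb C₂).card ≤ (stb (C₁ ∪ C₂)).card := by
    apply Finset.card_le_card
    intro g hg
    obtain ⟨g1, g2⟩ := Finset.mem_inter.1 hg
    apply mem_stb_of (h1.mono Finset.subset_union_left)
    intro x hx
    rw [Finset.mem_union] at hx ⊢
    rwa [stb_add_mem g1, stb_add_mem g2]
  have u1 : (C₁ ∪ C₂).card = C₁.card + (C₂ \ C₁).card := by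
    have := Finset.card_sdiff_add_card C₂ C₁
    rw [Finset.union_comm] at this
    omega
  have u2 : (C₁ ∪ C₂).card = C₂.card + (C₁ \ C₂).card := by
    have := Finset.card_sdiff_add_card C₁ C₂
    omega
  omega

/-- Dyson transform step. -/
lemma dyson (k : ℕ) : ∀ (A B : Finset G), B.card ≤ k → ∀ a ∈ A, (0 : G) ∈ B →
    ∃ C ⊆ A + B, a ∈ C ∧ A.card + B.card ≤ C.card + (stb C).card := by
  induction k with
  | zero =>
    intro A B hB a _ h0
    have : B = ∅ := by simpa using hB
    simp [this] at h0
  | succ k ih =>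
    intro A B hB a ha h0
    by_cases h : ∀ e ∈ A, ∀ b ∈ B, b + e ∈ A
    · refine ⟨A, fun x hx => Finset.mem_add.2 ⟨x, hx, 0, h0, add_zero x⟩, ha, ?_⟩
      have : B ⊆ stb A := fun b hb => mem_stb_of ⟨a, ha⟩ fun x hx => h x hx b hb
      have := Finset.card_le_card this
      omega
    · push Not at h
      obtain ⟨e, he, b, hb, hbe⟩ := h
      have hf := Finset.card_filter_add_card_filter_not (s := B) (fun b => b + e ∈ A)
      have hpos : 0 < (B.filter (fun b => ¬ b + e ∈ A)).card :=
        Finset.card_pos.2 ⟨b, Finset.mem_filter.2 ⟨hb, hbe⟩⟩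
      have hz : (0 : G) ∈ B.filter (fun b => b + e ∈ A) :=
        Finset.mem_filter.2 ⟨h0, by simpa using he⟩
      obtain ⟨C, hC, haC, hn⟩ := ih (A ∪ (B.filter (fun b => ¬ b + e ∈ A)).image (· + e))
        (B.filter (fun b => b + e ∈ A)) (by omega) a (Finset.mem_union_left _ ha) hz
      refine ⟨C, hC.trans ?_, haC, ?_⟩
      · intro x hx
        obtain ⟨y, hy, z, hz, rfl⟩ := Finset.mem_add.1 hx
        obtain ⟨hz1, hz2⟩ := Finset.mem_filter.1 hz
        rcases Finset.mem_union.1 hy with hy | hy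
        · exact Finset.add_mem_add hy hz1
        · obtain ⟨w, hw, rfl⟩ := Finset.mem_image.1 hy
          exact Finset.mem_add.2 ⟨z + e, hz2, w, (Finset.mem_filter.1 hw).1, by abel⟩
      · rw [Finset.card_union_of_disjoint, Finset.card_image_of_injective _ (add_left_injective e)]
          at hn
        · omega
        · rw [Finset.disjoint_right]
          intro x hx
          obtain ⟨w, hw, rfl⟩ := Finset.mem_image.1 hx
          exact (Finset.mem_filter.1 hw).2

lemma dyson' (A B : Finset G) {x : G} (hx : x ∈ A + B) :
    ∃ C ⊆ A + B, x ∈ C ∧ A.card + B.card ≤ C.card + (stb C).card := by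
  obtain ⟨a, ha, b, hb, rfl⟩ := Finset.mem_add.1 hx
  obtain ⟨C, hC, haC, hn⟩ := dyson (B.image (· - b)).card (A.image (· + b)) (B.image (· - b)) le_rfl
    (a + b) (Finset.mem_image_of_mem _ ha) (Finset.mem_image.2 ⟨b, hb, sub_self b⟩)
  refine ⟨C, hC.trans ?_, haC, ?_⟩
  · intro x hx
    obtain ⟨y, hy, z, hz, rfl⟩ := Finset.mem_add.1 hx
    obtain ⟨y', hy', rfl⟩ := Finset.mem_image.1 hy
    obtain ⟨z', hz', rfl⟩ := Finset.mem_image.1 hz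
    exact Finset.mem_add.2 ⟨y', hy', z', hz', by abel⟩
  · rwa [Finset.card_image_of_injective _ (add_left_injective b),
      Finset.card_image_of_injective _ (sub_left_injective)] at hn

/-- Kneser's theorem. -/
theorem kneser (A B : Finset G) (hA : A.Nonempty) (hB : B.Nonempty) :
    A.card + B.card ≤ (A + B).card + (stb (A + B)).card := by
  have main : ∀ X ⊆ A + B, ∃ C ⊆ A + B, X ⊆ C ∧ (X.Nonempty → 
      A.card + B.card ≤ C.card + (stb C).card) := by
    intro X
    induction X using Finset.induction_on with
    | empty => exact fun _ => ⟨∅, by simp, by simp, by simp⟩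
    | insert x X _ ih =>
      intro hX
      obtain ⟨hx, hX⟩ := Finset.insert_subset_iff.1 hX
      obtain ⟨D, hD, hxD, hnD⟩ := dyson' A B hx
      obtain ⟨C, hC, hXC, hn⟩ := ih hX
      rcases X.eq_empty_or_nonempty with rfl | hne
      · exact ⟨D, hD, by simpa using hxD, fun _ => hnD⟩
      · refine ⟨D ∪ C, Finset.union_subset hD hC, ?_, fun _ => ?_⟩
        · exact Finset.insert_subset (Finset.mem_union_left _ hxD)
            (hXC.trans Finset.subset_union_right)
        · exact lemB ⟨x, hxD⟩ (hne.mono hXC) hnD (hn hne)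
  obtain ⟨C, hC, hXC, hn⟩ := main _ subset_rfl
  rw [Finset.Subset.antisymm hXC hC]
  exact hn (hA.add hB)

/-- Isoperimetric bound. -/
lemma iso (S X : Finset G) (h0 : (0 : G) ∈ S) (hX : X.Nonempty) :
    (∀ m ∈ AddSubgroup.closure (S : Set G), ∀ x ∈ S + X, m + x ∈ S + X) ∨
      2 * X.card + S.card ≤ 2 * (S + X).card := by
  have hC : (S + X).Nonempty := Finset.Nonempty.add ⟨0, h0⟩ hX
  set H := stb (S + X) with hH
  by_cases hS : S ⊆ H
  · left
    intro m hm
    have : m ∈ H := by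
      induction hm using AddSubgroup.closure_induction with
      | mem x hx => exact hS hx
      | zero => exact zero_mem_stb hC
      | add x y _ _ hx hy => exact add_mem_stb hC hx hy
      | neg x _ hx => exact neg_mem_stb hC hx
    exact fun x hx => (stb_add_mem this).2 hx
  · right
    obtain ⟨s, hs, hsH⟩ := Finset.not_subset.1 hS
    have z : (0 : G) ∈ H := zero_mem_stb hC
    have e : (S + H) + X = S + X := by
      apply Finset.Subset.antisymm
      · intro x hx
        obtain ⟨y, hy, w, hw, rfl⟩ := Finset.mem_add.1 hx
        obtain ⟨u, hu, h, hh, rfl⟩ := Finset.mem_add.1 hy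
        rw [show u + h + w = h + (u + w) by abel, stb_add_mem hh]
        exact Finset.add_mem_add hu hw
      · exact Finset.add_subset_add_right
          fun x hx => Finset.mem_add.2 ⟨x, hx, 0, z, add_zero x⟩
    have k := kneser (S + H) X (Finset.Nonempty.add ⟨0, h0⟩ ⟨0, z⟩) hX
    rw [e, ← hH] at k
    have l1 : S.card ≤ (S + H).card :=
      Finset.card_le_card fun x hx => Finset.mem_add.2 ⟨x, hx, 0, z, add_zero x⟩
    have l2 : 2 * H.card ≤ (S + H).card := by
      have hsub : H ∪ H.image (s + ·) ⊆ S + H := by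
        intro x hx
        rcases Finset.mem_union.1 hx with hx | hx
        · exact Finset.mem_add.2 ⟨0, h0, x, hx, zero_add x⟩
        · obtain ⟨h, hh, rfl⟩ := Finset.mem_image.1 hx
          exact Finset.add_mem_add hs hh
      have := Finset.card_le_card hsub
      rw [Finset.card_union_of_disjoint, Finset.card_image_of_injective _ (add_right_injective s)]
        at this
      · omega
      · rw [Finset.disjoint_right]
        intro x hx hxH
        obtain ⟨h, hh, rfl⟩ := Finset.mem_image.1 hx
        apply hsH
        have := add_mem_stb hC hxH (neg_mem_stb hC hh)
        simpa using this
    omega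

end Kneser

theorem stmt7 {G : Type*} [AddCommGroup G] [DecidableEq G] (S T : Finset G)
    (h0S : (0 : G) ∈ S) (h0T : (0 : G) ∈ T) (hS2 : 2 ≤ S.card)
    (hap : IsAperiodic (S + T))
    (hcard : (S + T).card + 1 = S.card + T.card)
    (hnot : ¬ (T : Set G) ⊆ (AddSubgroup.closure (S : Set G) : Set G)) :
    QuasiPeriodic ((AddSubgroup.closure (S : Set G) : AddSubgroup G) : Set G)
      (T : Set G) := by
  classical
  set M := AddSubgroup.closure (S : Set G) with hM
  have hSM : ∀ s ∈ S, s ∈ M := fun s hs => AddSubgroup.subset_closure hs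
  let q : G → G ⧸ M := fun x => (x : G ⧸ M)
  have qadd : ∀ m ∈ M, ∀ x, q (m + x) = q x := by
    intro m hm x
    refine (QuotientAddGroup.eq (s := M)).2 ?_
    have : -(m + x) + x = -m := by abel
    rw [this]; exact M.neg_mem hm
  let I := T.image q
  let F : G ⧸ M → Finset G := fun i => T.filter (fun x => q x = i)
  have memF : ∀ i x, x ∈ F i ↔ x ∈ T ∧ q x = i := fun i x => Finset.mem_filter
  have memSF : ∀ i x, x ∈ S + F i ↔ x ∈ S + T ∧ q x = i := by
    intro i x
    constructor
    · intro hx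
      obtain ⟨s, hs, t, ht, rfl⟩ := Finset.mem_add.1 hx
      rw [memF] at ht
      exact ⟨Finset.add_mem_add hs ht.1, by rw [qadd s (hSM s hs)]; exact ht.2⟩
    · rintro ⟨hx, hq⟩
      obtain ⟨s, hs, t, ht, rfl⟩ := Finset.mem_add.1 hx
      rw [qadd s (hSM s hs)] at hq
      exact Finset.add_mem_add hs ((memF i t).2 ⟨ht, hq⟩)
  have hFne : ∀ i ∈ I, (F i).Nonempty := by
    intro i hi
    obtain ⟨t, ht, hti⟩ := Finset.mem_image.1 hi
    exact ⟨t, (memF i t).2 ⟨ht, hti⟩⟩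
  have hqI : ∀ x ∈ S + T, q x ∈ I := by
    intro x hx
    obtain ⟨s, hs, t, ht, rfl⟩ := Finset.mem_add.1 hx
    rw [qadd s (hSM s hs)]
    exact Finset.mem_image_of_mem _ ht
  have sumT : T.card = ∑ i ∈ I, (F i).card :=
    Finset.card_eq_sum_card_fiberwise fun x hx => Finset.mem_coe.2 (Finset.mem_image_of_mem q hx)
  have sumST : (S + T).card = ∑ i ∈ I, (S + F i).card := by
    rw [Finset.card_eq_sum_card_fiberwise (f := q) (t := I) fun x hx => hqI x hx]
    refine Finset.sum_congr rfl fun i _ => ?_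
    congr 1
    ext x
    rw [Finset.mem_filter, memSF]
  have subF : ∀ i, F i ⊆ S + F i := fun i x hx => Finset.mem_add.2 ⟨0, h0S, x, hx, zero_add x⟩
  have leF : ∀ i, (F i).card ≤ (S + F i).card := fun i => Finset.card_le_card (subF i)
  have perzero : ∀ g, (∀ x ∈ S + T, g + x ∈ S + T) → g = 0 := by
    intro g hg
    apply hap
    apply Finset.eq_of_subset_of_card_le
    · intro x hx
      obtain ⟨y, hy, z, hz, rfl⟩ := Finset.mem_add.1 hx
      rw [Finset.mem_singleton.1 hz, add_comm y g]
      exact hg y hy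
    · rw [Finset.card_add_singleton]
  let full : G ⧸ M → Prop := fun i => ∀ m ∈ M, ∀ x ∈ S + F i, m + x ∈ S + F i
  have hiso : ∀ i ∈ I, full i ∨ 2 * (F i).card + S.card ≤ 2 * (S + F i).card :=
    fun i hi => iso S (F i) h0S (hFne i hi)
  -- some fibre is not full
  obtain ⟨i0, hi0, hnf⟩ : ∃ i ∈ I, ¬ full i := by
    by_contra! hall
    obtain ⟨s, hs, hs0⟩ := Finset.exists_mem_ne (by omega : 1 < S.card) (0 : G)
    apply hs0
    apply perzero
    intro x hx
    have := hall (q x) (hqI x hx) s (hSM s hs) x ((memSF _ _).2 ⟨hx, rfl⟩)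
    exact ((memSF _ _).1 this).1
  have hSpos : 0 < S.card := by omega
  have s1 := Finset.add_sum_erase I (fun i => (F i).card) hi0
  have s2 := Finset.add_sum_erase I (fun i => (S + F i).card) hi0
  have hfull : ∀ i ∈ I, i ≠ i0 → full i := by
    intro i hi hne
    by_contra hnfi
    have a := (hiso i hi).resolve_left hnfi
    have b := (hiso i0 hi0).resolve_left hnf
    have hi' : i ∈ I.erase i0 := Finset.mem_erase.2 ⟨hne, hi⟩
    have t1 := Finset.add_sum_erase (I.erase i0) (fun i => (F i).card) hi'
    have t2 := Finset.add_sum_erase (I.erase i0) (fun i => (S + F i).card) hi'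
    have t3 : ∑ j ∈ (I.erase i0).erase i, (F j).card ≤ ∑ j ∈ (I.erase i0).erase i, (S + F j).card :=
      Finset.sum_le_sum fun j _ => leF j
    omega
  have hk := kneser S (F i0) ⟨0, h0S⟩ (hFne i0 hi0)
  have hst : (stb (S + F i0)).card ≤ 1 := by
    have hsub : stb (S + F i0) ⊆ {0} := by
      intro g hg
      rw [Finset.mem_singleton]
      obtain ⟨y, hy⟩ : (S + F i0).Nonempty := Finset.Nonempty.add ⟨0, h0S⟩ (hFne i0 hi0)
      have hgM : g ∈ M := by
        have h1 := ((memSF _ _).1 hy).2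
        have h2 := ((memSF _ _).1 ((stb_add_mem hg).2 hy)).2
        have h3 := (QuotientAddGroup.eq (s := M)).1 (h1.trans h2.symm)
        have : -y + (g + y) = g := by abel
        rwa [this] at h3
      apply perzero
      intro x hx
      have hx' : x ∈ S + F (q x) := (memSF _ _).2 ⟨hx, rfl⟩
      by_cases hq : q x = i0
      · rw [hq] at hx'
        exact ((memSF _ _).1 ((stb_add_mem hg).2 hx')).1
      · exact ((memSF _ _).1 (hfull _ (hqI x hx) hq g hgM x hx')).1
    simpa using Finset.card_le_card hsub
  have heq : ∀ i ∈ I, i ≠ i0 → F i = S + F i := by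
    intro i hi hne
    apply Finset.eq_of_subset_of_card_le (subF i)
    have hi' : i ∈ I.erase i0 := Finset.mem_erase.2 ⟨hne, hi⟩
    have t1 := Finset.add_sum_erase (I.erase i0) (fun i => (F i).card) hi'
    have t2 := Finset.add_sum_erase (I.erase i0) (fun i => (S + F i).card) hi'
    have t3 : ∑ j ∈ (I.erase i0).erase i, (F j).card ≤ ∑ j ∈ (I.erase i0).erase i, (S + F j).card :=
      Finset.sum_le_sum fun j _ => leF j
    omega
  obtain ⟨x0, hx0, hx0i⟩ := Finset.mem_image.1 hi0
  have memco : ∀ y, y ∈ ({x0} + (M : Set G) : Set G) ↔ q y = i0 := by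
    intro y
    rw [Set.singleton_add, Set.mem_image, ← hx0i]
    constructor
    · rintro ⟨m, hm, rfl⟩
      rw [add_comm]; exact qadd m hm x0
    · intro h
      refine ⟨-x0 + y, (QuotientAddGroup.eq (s := M)).1 h.symm, by abel⟩
  refine ⟨x0, Set.Subset.antisymm ?_ ?_⟩
  · rintro z ⟨t, ⟨ht, htn⟩, m, hm, rfl⟩
    rw [memco] at htn
    have hI : q t ∈ I := Finset.mem_image_of_mem q ht
    have h1 : t ∈ S + F (q t) := subF _ ((memF _ _).2 ⟨ht, rfl⟩)
    have h2 := hfull _ hI htn m hm t h1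
    rw [← heq _ hI htn, memF] at h2
    rw [add_comm] at h2
    refine ⟨h2.1, ?_⟩
    rw [memco]
    show ¬ q (t + m) = i0
    rw [h2.2]; exact htn
  · intro t ht
    exact ⟨t, ht, 0, M.zero_mem, add_zero t⟩
end

section
/- Let S and T be subsets of a finite abelian group G such that G is generated by S, S + T is aperiodic, 0 ∈ S ∩ T and |S + T| = |S| + |T| - 1. Then the set T^S - S is aperiodic and |T^S - S| = |T^S| + |S| - 1, where T^S = G \ (T + S) and T^S - S = {x - s : x ∈ T^S, s ∈ S}. -/
open scoped Pointwise

open scoped Classical in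
/-- `C` is stable under a subgroup `H` with `m ≤ |C| + |H|`. -/
def KGood {G : Type*} [AddCommGroup G] [Fintype G] (C : Finset G) (m : ℕ) : Prop :=
  ∃ H : AddSubgroup G, (∀ x ∈ C, ∀ h ∈ H, x + h ∈ C) ∧
    m ≤ C.card + (Finset.univ.filter (fun x => x ∈ H)).card

open scoped Classical in
theorem k_sum_card {G : Type*} [AddCommGroup G] [Fintype G] [DecidableEq G]
    (H K : AddSubgroup G) (P Q X : Finset G) (x : G) (hP : ∀ p ∈ P, p ∈ H) (hQ : ∀ q ∈ Q, q ∈ K)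
    (hP0 : P.Nonempty) (hQ0 : Q.Nonempty) (hX : ∀ p ∈ P, ∀ q ∈ Q, x + p + q ∈ X) :
    P.card + Q.card ≤ X.card + (Finset.univ.filter (fun x => x ∈ H ⊓ K)).card := by
  obtain ⟨p0, hp0⟩ := hP0
  obtain ⟨q0, hq0⟩ := hQ0
  have c1 : (P.image (fun p => x + p + q0)).card = P.card :=
    Finset.card_image_of_injective _ (fun a b h => by simpa using h)
  have c2 : (Q.image (fun q => x + p0 + q)).card = Q.card :=
    Finset.card_image_of_injective _ (fun a b h => by simpa using h)
  have c3 := Finset.card_union_add_card_inter (P.image (fun p => x + p + q0))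
    (Q.image (fun q => x + p0 + q))
  have c4 : (P.image (fun p => x + p + q0) ∪ Q.image (fun q => x + p0 + q)).card ≤ X.card := by
    apply Finset.card_le_card
    intro y hy
    simp only [Finset.mem_union, Finset.mem_image] at hy
    rcases hy with ⟨p, hp, rfl⟩ | ⟨q, hq, rfl⟩
    · exact hX p hp q0 hq0
    · exact hX p0 hp0 q hq
  have c5 : (P.image (fun p => x + p + q0) ∩ Q.image (fun q => x + p0 + q)).card ≤
      (Finset.univ.filter (fun x => x ∈ H ⊓ K)).card := by
    apply Finset.card_le_card_of_injOn (fun y => y - x - p0 - q0)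
    · intro y hy
      simp only [Finset.coe_inter, Set.mem_inter_iff, Finset.mem_coe, Finset.mem_image] at hy
      obtain ⟨⟨p, hp, rfl⟩, ⟨q, hq, h⟩⟩ := hy
      simp only [Finset.coe_filter, Finset.mem_univ, true_and, Set.mem_ofPred_eq,
        AddSubgroup.mem_inf]
      constructor
      · have : x + p + q0 - x - p0 - q0 = p - p0 := by abel
        rw [this]
        exact H.sub_mem (hP _ hp) (hP _ hp0)
      · have : x + p + q0 - x - p0 - q0 = q - q0 := by rw [← h]; abel
        rw [this]
        exact K.sub_mem (hQ _ hq) (hQ _ hq0)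
    · intro a _ b _ h
      simpa using h
  omega

open scoped Classical in
theorem k_aux {G : Type*} [AddCommGroup G] [Fintype G] [DecidableEq G]
    (H K : AddSubgroup G) (C D : Finset G)
    (hC : ∀ x ∈ C, ∀ h ∈ H, x + h ∈ C) (hD : ∀ x ∈ D, ∀ h ∈ K, x + h ∈ D)
    (x : G) (hxD : x ∈ D) (hxC : x ∉ C) :
    (Finset.univ.filter (fun x => x ∈ H)).card ≤ (D \ C).card ∨
    (Finset.univ.filter (fun x => x ∈ K)).card ≤ (D \ C).card ∨
    (Finset.univ.filter (fun x => x ∈ H)).card + (Finset.univ.filter (fun x => x ∈ K)).card ≤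
      (D \ C).card + (C \ D).card + 2 * (Finset.univ.filter (fun x => x ∈ H ⊓ K)).card := by
  have hC' : ∀ y, y ∉ C → ∀ h ∈ H, y + h ∉ C := by
    intro y hy h hh h2
    apply hy
    simpa using hC _ h2 _ (H.neg_mem hh)
  have hD' : ∀ y, y ∉ D → ∀ h ∈ K, y + h ∉ D := by
    intro y hy h hh h2
    apply hy
    simpa using hD _ h2 _ (K.neg_mem hh)
  by_cases h1 : ∀ p ∈ H, x + p ∈ D
  · left
    apply Finset.card_le_card_of_injOn (fun p => x + p)
    · intro p hp
      simp only [Finset.coe_filter, Finset.mem_univ, true_and, Set.mem_ofPred_eq] at hp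
      simp only [Finset.mem_coe, Finset.mem_sdiff]
      exact ⟨h1 p hp, hC' x hxC p hp⟩
    · intro a _ b _ h
      simpa using h
  by_cases h2 : ∀ q ∈ K, x + q ∉ C
  · right; left
    apply Finset.card_le_card_of_injOn (fun p => x + p)
    · intro p hp
      simp only [Finset.coe_filter, Finset.mem_univ, true_and, Set.mem_ofPred_eq] at hp
      simp only [Finset.mem_coe, Finset.mem_sdiff]
      exact ⟨hD x hxD p hp, h2 p hp⟩
    · intro a _ b _ h
      simpa using h
  right; right
  push Not at h1 h2
  obtain ⟨p0, hp0, hp0'⟩ := h1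
  obtain ⟨q0, hq0, hq0'⟩ := h2
  have e1 := k_sum_card H K ((Finset.univ.filter (fun x => x ∈ H)).filter (fun p => x + p ∈ D))
    ((Finset.univ.filter (fun x => x ∈ K)).filter (fun p => ¬ x + p ∈ C)) (D \ C) x
    (by simp +contextual) (by simp +contextual) ⟨0, by simp [hxD]⟩ ⟨0, by simp [hxC]⟩
    (by
      intro p hp q hq
      simp only [Finset.mem_filter, Finset.mem_univ, true_and] at hp hq
      rw [Finset.mem_sdiff]
      refine ⟨hD _ hp.2 _ hq.1, ?_⟩
      rw [add_right_comm]
      exact hC' _ hq.2 _ hp.1)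
  have e2 := k_sum_card H K ((Finset.univ.filter (fun x => x ∈ H)).filter (fun p => ¬ x + p ∈ D))
    ((Finset.univ.filter (fun x => x ∈ K)).filter (fun p => x + p ∈ C)) (C \ D) x
    (by simp +contextual) (by simp +contextual) ⟨p0, by simp [hp0, hp0']⟩
    ⟨q0, by simp [hq0, hq0']⟩
    (by
      intro p hp q hq
      simp only [Finset.mem_filter, Finset.mem_univ, true_and] at hp hq
      rw [Finset.mem_sdiff]
      refine ⟨?_, hD' _ hp.2 _ hq.1⟩
      rw [add_right_comm]
      exact hC _ hq.2 _ hp.1)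
  have e3 := Finset.card_filter_add_card_filter_not (s := Finset.univ.filter (fun x => x ∈ H))
    (fun p => x + p ∈ D)
  have e4 := Finset.card_filter_add_card_filter_not (s := Finset.univ.filter (fun x => x ∈ K))
    (fun p => x + p ∈ C)
  omega

theorem k_union {G : Type*} [AddCommGroup G] [Fintype G] [DecidableEq G]
    (C D : Finset G) (m : ℕ) (hC : KGood C m) (hD : KGood D m) : KGood (C ∪ D) m := by
  classical
  by_cases hDC : D ⊆ C
  · rwa [Finset.union_eq_left.2 hDC]
  by_cases hCD : C ⊆ D
  · rwa [Finset.union_eq_right.2 hCD]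
  obtain ⟨x, hx, hx'⟩ := Finset.not_subset.1 hDC
  obtain ⟨y, hy, hy'⟩ := Finset.not_subset.1 hCD
  obtain ⟨H, hH, hHm⟩ := hC
  obtain ⟨K, hK, hKm⟩ := hD
  refine ⟨H ⊓ K, ?_, ?_⟩
  · intro z hz h hh
    rw [Finset.mem_union] at hz ⊢
    rw [AddSubgroup.mem_inf] at hh
    exact hz.imp (fun hz => hH z hz h hh.1) (fun hz => hK z hz h hh.2)
  have a1 := k_aux H K C D hH hK x hx hx'
  have a2 := k_aux K H D C hK hH y hy hy'
  rw [inf_comm K H] at a2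
  have b1 := Finset.card_union_add_card_inter C D
  have b2 := Finset.card_sdiff_add_card_inter C D
  have b3 := Finset.card_sdiff_add_card_inter D C
  rw [Finset.inter_comm D C] at b3
  convert_to m ≤ (C ∪ D).card + (Finset.univ.filter (fun x => x ∈ H ⊓ K)).card
  omega

theorem k_dyson {G : Type*} [AddCommGroup G] [Fintype G] [DecidableEq G] (n : ℕ) :
    ∀ (A B : Finset G) (a b : G), B.card = n → a ∈ A → b ∈ B →
      ∃ C, C ⊆ A + B ∧ a + b ∈ C ∧ KGood C (A.card + B.card) := by
  induction n using Nat.strong_induction_on with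
  | _ n ih =>
  intro A B a b hn ha hb
  by_cases h : ∀ a' ∈ A, ∀ b' ∈ B, a' + (b' - b) ∈ A
  · refine ⟨A.image (fun z => z + b), ?_, Finset.mem_image_of_mem _ ha,
      AddSubgroup.closure ((B.image (fun z => z - b) : Finset G) : Set G), ?_, ?_⟩
    · intro z hz
      obtain ⟨w, hw, rfl⟩ := Finset.mem_image.1 hz
      exact Finset.add_mem_add hw hb
    · have key : ∀ g ∈ AddSubgroup.closure ((B.image (fun z => z - b) : Finset G) : Set G),
          ∀ z ∈ A, z + g ∈ A := by
        intro g hg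
        induction hg using AddSubgroup.closure_induction with
        | mem g hg =>
          intro z hz
          simp only [Finset.coe_image, Set.mem_image, Finset.mem_coe] at hg
          obtain ⟨w, hw, rfl⟩ := hg
          exact h z hz w hw
        | zero => intro z hz; simpa using hz
        | add u v _ _ hu hv =>
          intro z hz
          rw [← add_assoc]
          exact hv _ (hu _ hz)
        | neg u _ hu =>
          intro z hz
          have him : A.image (fun w => w + u) = A := by
            apply Finset.eq_of_subset_of_card_le
            · intro w hw
              obtain ⟨v, hv, rfl⟩ := Finset.mem_image.1 hw
              exact hu v hv
            · rw [Finset.card_image_of_injective _ (add_left_injective u)]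
          rw [← him] at hz
          obtain ⟨v, hv, rfl⟩ := Finset.mem_image.1 hz
          simpa using hv
      intro z hz g hg
      obtain ⟨w, hw, rfl⟩ := Finset.mem_image.1 hz
      rw [add_right_comm]
      exact Finset.mem_image_of_mem _ (key g hg w hw)
    · rw [Finset.card_image_of_injective _ (add_left_injective b)]
      apply Nat.add_le_add_left
      apply Finset.card_le_card_of_injOn (fun z => z - b)
      · intro z hz
        simp only [Finset.coe_filter, Finset.mem_univ, true_and, Set.mem_ofPred_eq]
        apply AddSubgroup.subset_closure
        exact Finset.mem_coe.2 (Finset.mem_image_of_mem _ hz)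
      · intro u _ v _ h
        simpa using h
  · push Not at h
    obtain ⟨a', ha', b', hb', hab⟩ := h
    set B1 := B.filter (fun z => a' + (z - b) ∈ A) with hB1
    set E := (B.filter (fun z => ¬ a' + (z - b) ∈ A)).image (fun z => a' + (z - b)) with hE
    have hcB := Finset.card_filter_add_card_filter_not (s := B) (fun z => a' + (z - b) ∈ A)
    rw [← hB1] at hcB
    have hcE : E.card = (B.filter (fun z => ¬ a' + (z - b) ∈ A)).card :=
      Finset.card_image_of_injective _ (fun u v h => by simpa using h)
    have hpos : 0 < (B.filter (fun z => ¬ a' + (z - b) ∈ A)).card :=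
      Finset.card_pos.2 ⟨b', by simp [hb', hab]⟩
    have hdis : Disjoint A E := by
      rw [Finset.disjoint_right]
      intro z hz
      obtain ⟨w, hw, rfl⟩ := Finset.mem_image.1 hz
      exact (Finset.mem_filter.1 hw).2
    have hcA : (A ∪ E).card = A.card + E.card := Finset.card_union_of_disjoint hdis
    obtain ⟨C, hC, hm, hg⟩ := ih B1.card (by omega) (A ∪ E) B1 a b rfl
      (Finset.mem_union_left _ ha) (by simp [hB1, hb, ha'])
    refine ⟨C, hC.trans ?_, hm, ?_⟩
    · intro z hz
      obtain ⟨u, hu, v, hv, rfl⟩ := Finset.mem_add.1 hz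
      have hv' := Finset.mem_filter.1 hv
      rcases Finset.mem_union.1 hu with hu | hu
      · exact Finset.add_mem_add hu hv'.1
      · obtain ⟨w, hw, rfl⟩ := Finset.mem_image.1 hu
        have : a' + (w - b) + v = (a' + (v - b)) + w := by abel
        rw [this]
        exact Finset.add_mem_add hv'.2 (Finset.mem_filter.1 hw).1
    · have : (A ∪ E).card + B1.card = A.card + B.card := by omega
      rwa [this] at hg

theorem k_kneser {G : Type*} [AddCommGroup G] [Fintype G] [DecidableEq G] (A B : Finset G)
    (hA : A.Nonempty) (hB : B.Nonempty) : KGood (A + B) (A.card + B.card) := by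
  classical
  obtain ⟨a, ha⟩ := hA
  obtain ⟨b, hb⟩ := hB
  have key : ∀ F : Finset G, F ⊆ A + B →
      ∃ C, F ⊆ C ∧ C ⊆ A + B ∧ KGood C (A.card + B.card) := by
    intro F
    induction F using Finset.induction_on with
    | empty =>
      intro _
      obtain ⟨C, hC, _, hg⟩ := k_dyson _ A B a b rfl ha hb
      exact ⟨C, by simp, hC, hg⟩
    | insert z F _ ih =>
      intro hF
      obtain ⟨C, h1, h2, h3⟩ := ih ((Finset.subset_insert _ _).trans hF)
      obtain ⟨u, hu, v, hv, rfl⟩ := Finset.mem_add.1 (hF (Finset.mem_insert_self _ _))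
      obtain ⟨D, hD, hm, hg⟩ := k_dyson _ A B u v rfl hu hv
      refine ⟨C ∪ D, ?_, Finset.union_subset h2 hD, k_union _ _ _ h3 hg⟩
      rw [Finset.insert_subset_iff]
      exact ⟨Finset.mem_union_right _ hm, h1.trans Finset.subset_union_left⟩
  obtain ⟨C, h1, h2, h3⟩ := key _ subset_rfl
  rwa [Finset.Subset.antisymm h2 h1] at h3

theorem k_stable {G : Type*} [AddCommGroup G] [DecidableEq G] (A : Finset G) (g : G)
    (h : ∀ x ∈ A, x + g ∈ A) : A + ({g} : Finset G) = A := by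
  apply Finset.eq_of_subset_of_card_le
  · intro w hw
    obtain ⟨u, hu, v, hv, rfl⟩ := Finset.mem_add.1 hw
    rw [Finset.mem_singleton.1 hv]
    exact h u hu
  · simp

theorem k_kneser' {G : Type*} [AddCommGroup G] [Fintype G] [DecidableEq G] (A B : Finset G)
    (hA : A.Nonempty) (hB : B.Nonempty) (hap : IsAperiodic (A + B)) :
    A.card + B.card ≤ (A + B).card + 1 := by
  classical
  obtain ⟨H, h1, h2⟩ := k_kneser A B hA hB
  refine h2.trans (Nat.add_le_add_left ?_ _)
  apply Finset.card_le_one.2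
  have : ∀ g ∈ H, g = 0 := fun g hg => hap g (k_stable _ _ (fun x hx => h1 x hx g hg))
  intro u hu v hv
  rw [this u (by simpa using hu), this v (by simpa using hv)]

theorem stmt8 {G : Type*} [AddCommGroup G] [Fintype G] [DecidableEq G] (S T : Finset G)
    (hgen : AddSubgroup.closure (S : Set G) = ⊤)
    (hap : IsAperiodic (S + T)) (h0S : (0 : G) ∈ S) (h0T : (0 : G) ∈ T)
    (hcard : (S + T).card + 1 = S.card + T.card) :
    IsAperiodic ((Finset.univ \ (T + S)) - S) ∧
      ((Finset.univ \ (T + S)) - S).card + 1 = (Finset.univ \ (T + S)).card + S.card := by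
  set X := (Finset.univ \ (T + S)) - S with hX
  have hTX : T ⊆ Xᶜ := by
    intro t ht
    rw [Finset.mem_compl]
    intro hx
    obtain ⟨d, hd, s, hs, rfl⟩ := Finset.mem_sub.1 hx
    apply (Finset.mem_sdiff.1 hd).2
    simpa using Finset.add_mem_add ht hs
  have hsum : S + Xᶜ = S + T := by
    apply Finset.Subset.antisymm _ (Finset.add_subset_add_left hTX)
    intro z hz
    obtain ⟨s, hs, y, hy, rfl⟩ := Finset.mem_add.1 hz
    by_contra hc
    rw [Finset.mem_compl] at hy
    apply hy
    refine Finset.mem_sub.2 ⟨s + y, ?_, s, hs, by abel⟩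
    rw [Finset.mem_sdiff, add_comm T S]
    exact ⟨Finset.mem_univ _, hc⟩
  have hXap : IsAperiodic X := by
    intro g hg
    apply hap
    rw [← hsum]
    have hst : Xᶜ + ({g} : Finset G) = Xᶜ := by
      apply k_stable
      intro x hx
      rw [Finset.mem_compl] at hx ⊢
      intro h
      rw [← hg] at h
      obtain ⟨u, hu, v, hv, huv⟩ := Finset.mem_add.1 h
      rw [Finset.mem_singleton.1 hv] at huv
      exact hx (add_right_cancel huv ▸ hu)
    rw [add_assoc, hst]
  refine ⟨hXap, ?_⟩
  have hk := k_kneser' S Xᶜ ⟨0, h0S⟩ ⟨0, hTX h0T⟩ (by rwa [hsum])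
  rw [hsum] at hk
  have e1 := Finset.card_le_card hTX
  have e2 := Finset.card_add_card_compl X
  have e3 := Finset.card_add_card_compl (T + S)
  rw [Finset.compl_eq_univ_sdiff, add_comm T S] at e3
  rw [add_comm T S]
  omega
end

section
/- Let S be a 2-separable finite subset of an abelian group G with 0 ∈ S, |S| ≤ (|G|+1)/2 and κ₂(S) ≤ |S| - 1. If S is not an arithmetic progression, then there is a subgroup H of G which is a 2-fragment of S. -/
open scoped Pointwise Classical

/-- The `k`-th connectivity `κ_k(S)`: minimum of `|X + S| - |X|` over finite `X`
with `|X| ≥ k` and `|X + S| ≤ |G| - k`, with `min ∅ = |G| - 2k + 1`. -/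
noncomputable def kappa {G : Type*} [AddCommGroup G] [DecidableEq G]
    (k : ℕ) (S : Finset G) : ℕ :=
  if ∃ X : Finset G, k ≤ X.card ∧ (X + S).card ≤ Nat.card G - k then
    sInf {d : ℕ | ∃ X : Finset G, k ≤ X.card ∧ (X + S).card ≤ Nat.card G - k ∧
      d = (X + S).card - X.card}
  else Nat.card G - 2 * k + 1

/-- `S` is `k`-separable: some `X` has `|X| ≥ k` and `|G \ (X + S)| ≥ k`. -/
def KSeparable {G : Type*} [AddCommGroup G] [DecidableEq G] (k : ℕ) (S : Finset G) : Prop :=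
  ∃ X : Finset G, k ≤ X.card ∧ (X + S).card ≤ Nat.card G - k

/-- `X` is a `k`-fragment of `S`: `|X| ≥ k`, `|G \ (X + S)| ≥ k` and
`|X + S| - |X| = κ_k(S)`. -/
def IsFragment {G : Type*} [AddCommGroup G] [DecidableEq G] (k : ℕ) (S X : Finset G) : Prop :=
  k ≤ X.card ∧ (X + S).card ≤ Nat.card G - k ∧ (X + S).card - X.card = kappa k S

/-- A hyper-atom of `S` is a subgroup of maximal cardinality which is a `1`-fragment. -/
def IsHyperAtom {G : Type*} [AddCommGroup G] [DecidableEq G]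
    (S : Finset G) (H : AddSubgroup G) : Prop :=
  (∃ HF : Finset G, (HF : Set G) = (H : Set G) ∧ IsFragment 1 S HF) ∧
  ∀ (K : AddSubgroup G) (KF : Finset G), (KF : Set G) = (K : Set G) →
    IsFragment 1 S KF → Nat.card K ≤ Nat.card H

/-- `A` is an arithmetic progression with difference `d`:
`A = {a, a + d, ..., a + (k-1)d}` with the listed elements pairwise distinct. -/
def IsAPWith {G : Type*} [AddCommGroup G] [DecidableEq G] (d : G) (A : Finset G) : Prop :=
  ∃ (a : G) (k : ℕ), A.card = k ∧
    A = (Finset.range k).image (fun i => a + (i : ℕ) • d)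

theorem z_mem_vadd {G : Type*} [AddCommGroup G] [DecidableEq G] (x y : G) (A : Finset G) :
    y ∈ x +ᵥ A ↔ y - x ∈ A := by
  rw [Finset.mem_vadd_finset]
  constructor
  · rintro ⟨a, ha, rfl⟩
    simpa using ha
  · intro h
    exact ⟨y - x, h, by simp⟩

/-- admissible sets -/
def ZAdm {G : Type*} [AddCommGroup G] [Fintype G] [DecidableEq G] (S X : Finset G) : Prop :=
  2 ≤ X.card ∧ (X + S).card + 2 ≤ Fintype.card G

/-- 2-atoms -/
def ZAtom {G : Type*} [AddCommGroup G] [Fintype G] [DecidableEq G] (S A : Finset G) : Prop :=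
  ZAdm S A ∧ (∀ X, ZAdm S X → (A + S).card + X.card ≤ (X + S).card + A.card) ∧
  ∀ X, ZAdm S X → (X + S).card + A.card = (A + S).card + X.card → A.card ≤ X.card

def ZSidon {G : Type*} [AddCommGroup G] [DecidableEq G] (A : Finset G) : Prop :=
  ∀ x : G, x ≠ 0 → (A ∩ (x +ᵥ A)).card ≤ 1

set_option linter.unusedSectionVars false

section
variable {G : Type*} [AddCommGroup G] [Fintype G] [DecidableEq G]

theorem z_vadd_add (x : G) (A S : Finset G) : ((x +ᵥ A) + S).card = (A + S).card := by
  rw [vadd_add_assoc, Finset.card_vadd_finset]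

theorem z_atom_vadd {S A : Finset G} (h : ZAtom S A) (x : G) : ZAtom S (x +ᵥ A) := by
  unfold ZAtom ZAdm at *
  simpa only [z_vadd_add, Finset.card_vadd_finset] using h

theorem z_exists_atom {S X : Finset G} (hS : S.Nonempty) (h : ZAdm S X) :
    ∃ A, ZAtom S A ∧ (0 : G) ∈ A := by
  have key : ∃ A, ZAtom S A := by
    obtain ⟨F, hF, hFm⟩ := (Finset.univ.filter (fun Y => ZAdm S Y)).exists_min_image
      (fun Y => (Y + S).card - Y.card) ⟨X, by simp [h]⟩
    simp only [Finset.mem_filter, Finset.mem_univ, true_and] at hF hFm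
    obtain ⟨A, hA, hAm⟩ := (Finset.univ.filter (fun Y => ZAdm S Y ∧
      (Y + S).card - Y.card = (F + S).card - F.card)).exists_min_image
      (fun Y => Y.card) ⟨F, by simp [hF]⟩
    simp only [Finset.mem_filter, Finset.mem_univ, true_and] at hA hAm
    have hle : ∀ Y : Finset G, Y.card ≤ (Y + S).card :=
      fun Y => Finset.card_le_card_add_right hS
    refine ⟨A, hA.1, ?_, ?_⟩
    · intro Y hY
      have := hFm Y hY
      have := hle Y
      have := hle A
      have := hle F
      omega
    · intro Y hY hY2
      apply hAm Y ⟨hY, _⟩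
      have := hle Y
      have := hle A
      have := hle F
      omega
  obtain ⟨A, hA⟩ := key
  have : A.Nonempty := Finset.card_pos.1 (by have := hA.1.1; omega)
  obtain ⟨a, ha⟩ := this
  refine ⟨-a +ᵥ A, z_atom_vadd hA _, ?_⟩
  rw [z_mem_vadd]
  simpa using ha

theorem z_inter {S A : Finset G} (h : ZAtom S A) (x : G)
    (hx : 2 ≤ (A ∩ (x +ᵥ A)).card) : x +ᵥ A = A := by
  obtain ⟨⟨h1, h2⟩, h3, h4⟩ := h
  have hcx : (x +ᵥ A).card = A.card := Finset.card_vadd_finset _ _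
  have hsx := z_vadd_add x A S
  -- dual
  have hdual : A.card + (A + S).card ≤ Fintype.card G := by
    set D := -((A + S)ᶜ) with hD
    have hDc : D.card + (A + S).card = Fintype.card G := by
      rw [hD, Finset.card_neg, Finset.card_compl]
      omega
    have hDS : (D + S).card + A.card ≤ Fintype.card G := by
      have hdis : Disjoint (D + S) (-A) := by
        rw [Finset.disjoint_left]
        intro y hy hyA
        obtain ⟨d, hd, s, hs, rfl⟩ := Finset.mem_add.1 hy
        rw [hD, Finset.mem_neg'] at hd
        rw [Finset.mem_neg'] at hyA
        rw [Finset.mem_compl] at hd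
        apply hd
        have := Finset.add_mem_add hyA hs
        simpa using this
      have := Finset.card_union_of_disjoint hdis
      rw [Finset.card_neg] at this
      rw [← this]
      exact Finset.card_le_univ _
    have hadm : ZAdm S D := ⟨by omega, by omega⟩
    have := h3 D hadm
    have := h4 D hadm (by omega)
    omega
  have hI : (A ∩ (x +ᵥ A) + S).card ≤ (A + S).card :=
    Finset.card_le_card (Finset.add_subset_add_right Finset.inter_subset_left)
  have hIadm : ZAdm S (A ∩ (x +ᵥ A)) := ⟨hx, by omega⟩
  have hIk := h3 _ hIadm
  have hcu := Finset.card_union_add_card_inter A (x +ᵥ A)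
  have hsu := Finset.card_union_add_card_inter (A + S) ((x +ᵥ A) + S)
  rw [← Finset.union_add] at hsu
  have hsub : (A ∩ (x +ᵥ A) + S).card ≤ ((A + S) ∩ ((x +ᵥ A) + S)).card :=
    Finset.card_le_card Finset.inter_add_subset
  have hU : ZAdm S (A ∪ (x +ᵥ A)) := ⟨h1.trans (Finset.card_le_card Finset.subset_union_left),
    by omega⟩
  have hUk := h3 _ hU
  have := h4 _ hIadm (by omega)
  have e1 : A ∩ (x +ᵥ A) = A := Finset.eq_of_subset_of_card_le Finset.inter_subset_left this
  exact (Finset.eq_of_subset_of_card_le (Finset.inter_eq_left.1 e1) (by omega)).symm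

theorem z_subgroup_or_sidon {S A : Finset G} (h : ZAtom S A) (h0 : (0 : G) ∈ A) :
    (∃ H : AddSubgroup G, (A : Set G) = H) ∨ ZSidon A := by
  by_cases hs : ZSidon A
  · exact Or.inr hs
  left
  unfold ZSidon at hs
  push Not at hs
  obtain ⟨x, hx0, hx⟩ := hs
  have e := z_inter h x hx
  have hmem : ∀ y, y - x ∈ A ↔ y ∈ A := fun y => by rw [← z_mem_vadd, e]
  have hxA : x ∈ A := (hmem x).1 (by simpa using h0)
  have hstab : ∀ a ∈ A, a +ᵥ A = A := by
    intro a ha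
    apply z_inter h a
    have : ({a, a + x} : Finset G) ⊆ A ∩ (a +ᵥ A) := by
      intro y hy
      simp only [Finset.mem_insert, Finset.mem_singleton] at hy
      rw [Finset.mem_inter, z_mem_vadd]
      rcases hy with rfl | rfl
      · simpa using ⟨ha, h0⟩
      · refine ⟨(hmem _).1 (by simpa using ha), by simpa using hxA⟩
    have h2 := Finset.card_le_card this
    rwa [Finset.card_pair (by simpa using hx0)] at h2
  refine ⟨{ carrier := A, add_mem' := ?_, zero_mem' := h0, neg_mem' := ?_ }, rfl⟩
  · intro a b ha hb
    have : a + b ∈ a +ᵥ A := by rw [z_mem_vadd]; simpa using hb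
    rw [hstab a ha] at this
    exact this
  · intro a ha
    have : (0 : G) ∈ a +ᵥ A := by rw [hstab a ha]; exact h0
    rw [z_mem_vadd] at this
    simpa using this

theorem z_pair {A : Finset G} (hA : ZSidon A) {x y : G} (hxy : x ≠ y) :
    ((x +ᵥ A) ∩ (y +ᵥ A)).card ≤ 1 := by
  have : (x +ᵥ A) ∩ (y +ᵥ A) = x +ᵥ (A ∩ ((y - x) +ᵥ A)) := by
    ext z
    simp only [Finset.mem_inter, z_mem_vadd]
    rw [show z - x - (y - x) = z - y by abel]
  rw [this, Finset.card_vadd_finset]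
  exact hA _ (sub_ne_zero.2 hxy.symm)

theorem z_vadd_sub {A X : Finset G} {x : G} (hx : x ∈ X) : x +ᵥ A ⊆ X + A := by
  intro y hy
  rw [z_mem_vadd] at hy
  have := Finset.add_mem_add hx hy
  simpa using this

theorem z_sum2 {A X : Finset G} (hA : ZSidon A) (hX : 2 ≤ X.card) :
    2 * A.card ≤ (X + A).card + 1 := by
  obtain ⟨x, hx, y, hy, hxy⟩ := Finset.one_lt_card.1 hX
  have h1 := z_pair hA hxy
  have h2 := Finset.card_union_add_card_inter (x +ᵥ A) (y +ᵥ A)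
  have h3 := Finset.card_le_card (Finset.union_subset (z_vadd_sub (A := A) hx) (z_vadd_sub (A := A) hy))
  simp only [Finset.card_vadd_finset] at h2
  omega

theorem z_sum3 {A X : Finset G} (hA : ZSidon A) (hX : 3 ≤ X.card) :
    3 * A.card ≤ (X + A).card + 3 := by
  obtain ⟨x, hx, y, hy, z, hz, hxy, hxz, hyz⟩ := Finset.two_lt_card.1 hX
  have h1 := z_pair hA hxy
  have h1' := z_pair hA hxz
  have h1'' := z_pair hA hyz
  have h2 := Finset.card_union_add_card_inter (x +ᵥ A) (y +ᵥ A)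
  have h4 := Finset.card_union_add_card_inter ((x +ᵥ A) ∪ (y +ᵥ A)) (z +ᵥ A)
  have h3 := Finset.card_le_card (Finset.union_subset (Finset.union_subset
    (z_vadd_sub (A := A) hx) (z_vadd_sub (A := A) hy)) (z_vadd_sub (A := A) hz))
  rw [Finset.union_inter_distrib_right] at h4
  have h5 := Finset.card_union_le ((x +ᵥ A) ∩ (z +ᵥ A)) ((y +ᵥ A) ∩ (z +ᵥ A))
  simp only [Finset.card_vadd_finset] at h2 h4
  omega

theorem z_vosper {A X : Finset G} (hA : ZSidon A) (hA3 : 3 ≤ A.card) (h0 : (0 : G) ∈ A)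
    (hgen : AddSubgroup.closure (A : Set G) = ⊤) (hX : ZAdm A X) :
    X.card + A.card ≤ (X + A).card := by
  by_contra hcon
  obtain ⟨B, hB, hB0⟩ := z_exists_atom ⟨0, h0⟩ hX
  have hk := hB.2.1 X hX
  have hB2 := hB.1.1
  have hs2 := z_sum2 hA hB2
  by_cases hB3 : B.card = 2
  · omega
  have hs3 := z_sum3 hA (X := B) (by omega)
  by_cases hBA : B.card ≤ A.card
  · omega
  rcases z_subgroup_or_sidon hB hB0 with ⟨H, hH⟩ | hBS
  · by_cases hsub : A ⊆ B
    · have : AddSubgroup.closure (A : Set G) ≤ H := by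
        rw [AddSubgroup.closure_le, ← hH]
        exact_mod_cast hsub
      rw [hgen, top_le_iff] at this
      have hBu : B = Finset.univ := by
        rw [← Finset.coe_inj, hH, this]; simp
      have := hB.1.2
      have h5 : B.card ≤ (B + A).card := Finset.card_le_card_add_right ⟨0, h0⟩
      rw [hBu, Finset.card_univ] at h5
      rw [hBu] at this
      omega
    · obtain ⟨a, ha, haB⟩ := Finset.not_subset.1 hsub
      have hdis : Disjoint B (a +ᵥ B) := by
        rw [Finset.disjoint_left]
        intro y hy hy2
        rw [z_mem_vadd] at hy2
        apply haB
        have m : ∀ w, w ∈ B ↔ w ∈ H := fun w => by rw [← Finset.mem_coe, hH]; rfl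
        rw [m] at *
        have := H.sub_mem hy hy2
        simpa using this
      have h6 := Finset.card_union_of_disjoint hdis
      have h7 : B ∪ (a +ᵥ B) ⊆ B + A := by
        apply Finset.union_subset
        · rw [add_comm]
          have := z_vadd_sub (A := B) h0
          simpa using this
        · rw [add_comm]
          exact z_vadd_sub ha
      have h8 := Finset.card_le_card h7
      rw [Finset.card_vadd_finset] at h6
      omega
  · have := z_sum3 hBS hA3
    rw [add_comm A B] at this
    omega

/-- the finset of elements of a subgroup -/
noncomputable def zfs (K : AddSubgroup G) : Finset G := Finset.univ.filter (fun x => x ∈ K)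

theorem z_mem_fs (K : AddSubgroup G) (x : G) : x ∈ zfs K ↔ x ∈ K := by simp [zfs]

theorem z_card_fs (K : AddSubgroup G) : (zfs K).card = Fintype.card K := by
  rw [Fintype.card_subtype]; rfl

theorem z_coset {A X : Finset G} (hA : ZSidon A) (hA3 : 3 ≤ A.card) (h0 : (0 : G) ∈ A)
    (K : AddSubgroup G) (hK : AddSubgroup.closure (A : Set G) = K) (g : G)
    (hXg : ∀ x ∈ X, x - g ∈ K) (hX2 : 2 ≤ X.card)
    (hX : (X + A).card + 2 ≤ (zfs K).card) :
    X.card + A.card ≤ (X + A).card := by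
  subst hK
  set K := AddSubgroup.closure (A : Set G) with hKdef
  have hAK : ∀ a ∈ A, a ∈ K := fun a ha => AddSubgroup.subset_closure ha
  set A' : Finset K := Finset.univ.filter (fun a : K => (a : G) ∈ A) with hA'
  set X' : Finset K := Finset.univ.filter (fun a : K => (a : G) + g ∈ X) with hX'
  have hinj : Function.Injective K.subtype := Subtype.val_injective
  have eA : A'.image K.subtype = A := by
    ext a
    simp only [hA', Finset.mem_image, Finset.mem_filter, Finset.mem_univ, true_and]
    constructor
    · rintro ⟨b, hb, rfl⟩; exact hb
    · intro ha; exact ⟨⟨a, hAK a ha⟩, ha, rfl⟩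
  have eX : X'.image K.subtype = -g +ᵥ X := by
    ext a
    rw [z_mem_vadd]
    simp only [hX', Finset.mem_image, Finset.mem_filter, Finset.mem_univ, true_and]
    constructor
    · rintro ⟨b, hb, rfl⟩; simpa using hb
    · intro ha
      have := hXg _ ha
      simp only [sub_neg_eq_add, add_sub_cancel_right] at this
      exact ⟨⟨a, this⟩, by simpa using ha, rfl⟩
  have cA : A'.card = A.card := by
    rw [← eA, Finset.card_image_of_injective _ hinj]
  have cX : X'.card = X.card := by
    rw [← Finset.card_vadd_finset (-g) X, ← eX, Finset.card_image_of_injective _ hinj]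
  have cXA : (X' + A').card = (X + A).card := by
    rw [← Finset.card_image_of_injective _ hinj, Finset.image_add, eA, eX, z_vadd_add]
  have hS : ZSidon A' := by
    intro x hx
    rw [← Finset.card_image_of_injective _ hinj]
    refine le_trans (Finset.card_le_card ?_) (hA (x : G) (by simpa using hx))
    intro y hy
    obtain ⟨b, hb, rfl⟩ := Finset.mem_image.1 hy
    rw [Finset.mem_inter, z_mem_vadd] at hb ⊢
    simpa [hA'] using hb
  have hgen : AddSubgroup.closure (A' : Set K) = ⊤ := by
    have := AddSubgroup.closure_closure_coe_preimage (k := (A : Set G))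
    rw [← this]
    congr 1
    ext a
    simp [hA']
  have := z_vosper (X := X') hS (by omega) (by simpa [hA'] using h0) hgen
    ⟨by omega, by rw [z_card_fs] at hX; omega⟩
  omega

theorem z_fs_compl (K : AddSubgroup G) (S : Finset G) (h : (zfs K + S).card < Fintype.card G) :
    (zfs K + S).card + (zfs K).card ≤ Fintype.card G := by
  obtain ⟨y, hy⟩ : ∃ y, y ∉ zfs K + S := by
    by_contra hcon
    push Not at hcon
    rw [Finset.eq_univ_of_forall hcon, Finset.card_univ] at h
    omega
  have hd : Disjoint (zfs K + S) (y +ᵥ zfs K) := by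
    rw [Finset.disjoint_left]
    intro z hz hz2
    obtain ⟨k, hk, s, hs, rfl⟩ := Finset.mem_add.1 hz
    apply hy
    rw [z_mem_vadd, z_mem_fs] at hz2
    rw [z_mem_fs] at hk
    have : k - (k + s - y) ∈ zfs K := by rw [z_mem_fs]; exact K.sub_mem hk hz2
    have := Finset.add_mem_add this hs
    convert this using 1
    abel
  have := Finset.card_union_of_disjoint hd
  rw [Finset.card_vadd_finset] at this
  rw [← this]
  exact Finset.card_le_univ _

theorem z_main {S A : Finset G} (h : ZAtom S A) (h0 : (0 : G) ∈ A)
    (hk : (A + S).card + 1 ≤ A.card + S.card) (hA : ZSidon A) (hA3 : 3 ≤ A.card) : False := by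
  obtain ⟨⟨h1, h2⟩, h3, h4⟩ := h
  set K := AddSubgroup.closure (A : Set G) with hKdef
  have hAK : ∀ a ∈ A, a ∈ K := fun a ha => AddSubgroup.subset_closure ha
  have hAKf : A ⊆ zfs K := fun a ha => (z_mem_fs K a).2 (hAK a ha)
  have hAKc := Finset.card_le_card hAKf
  have hKA : A.card + 2 ≤ (zfs K).card := by
    have h5 := z_sum3 hA hA3
    have h6 : A + A ⊆ zfs K := by
      intro z hz
      obtain ⟨a, ha, b, hb, rfl⟩ := Finset.mem_add.1 hz
      exact (z_mem_fs K _).2 (K.add_mem (hAK a ha) (hAK b hb))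
    have h7 := Finset.card_le_card h6
    omega
  -- the key consequence of atomicity
  have hKS : (A + S).card + 1 < (zfs K + S).card := by
    by_contra hcon
    have h8 := z_fs_compl K S (by omega)
    have := h3 (zfs K) ⟨by omega, by omega⟩
    omega
  -- every element has two representations
  have hrep : ∀ g ∈ S, ∃ a ∈ A, a ≠ 0 ∧ g - a ∈ S := by
    intro g hg
    have hc : (A.erase 0).card + 1 = A.card := Finset.card_erase_add_one h0
    have hsub : A.erase 0 + S ⊆ A + S := Finset.add_subset_add_right (Finset.erase_subset _ _)
    have hle := Finset.card_le_card hsub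
    have hadm : ZAdm S (A.erase 0) := ⟨by omega, by omega⟩
    have h5 := h3 _ hadm
    have h6 := h4 _ hadm
    have h7 : (A + S).card ≤ (A.erase 0 + S).card := by
      by_contra hcon
      have := h6 (by omega)
      omega
    have h8 := Finset.eq_of_subset_of_card_le hsub h7
    have h9 : g ∈ A.erase 0 + S := by
      rw [h8]
      have := Finset.add_mem_add h0 hg
      simpa using this
    obtain ⟨a, ha, s, hs, rfl⟩ := Finset.mem_add.1 h9
    rw [Finset.mem_erase] at ha
    exact ⟨a, ha.2, ha.1, by simpa using hs⟩
  -- decomposition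
  have hloc : ∀ g ∈ S, (zfs K).card ≤ ((S.filter (fun s => s - g ∈ K)) + A).card ∨
      ((zfs K).card = ((S.filter (fun s => s - g ∈ K)) + A).card + 1 ∧
      ∀ r ∈ S.filter (fun s => s - g ∉ K), ∀ a ∈ A, r + a ∈ S.filter (fun s => s - g ∉ K)) := by
    intro g hg
    set T := S.filter (fun s => s - g ∈ K) with hT
    set R := S.filter (fun s => s - g ∉ K) with hR
    have hTR : T.card + R.card = S.card := Finset.card_filter_add_card_filter_not _
    have hTm : ∀ t, t ∈ T ↔ t ∈ S ∧ t - g ∈ K := fun t => by rw [hT, Finset.mem_filter]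
    have hRm : ∀ t, t ∈ R ↔ t ∈ S ∧ t - g ∉ K := fun t => by rw [hR, Finset.mem_filter]
    have hsum : (T + A).card + (R + A).card ≤ (A + S).card := by
      have hd : Disjoint (T + A) (R + A) := by
        rw [Finset.disjoint_left]
        intro z hz hz2
        obtain ⟨t, ht, a, ha, rfl⟩ := Finset.mem_add.1 hz
        obtain ⟨r, hr, b, hb, hrb⟩ := Finset.mem_add.1 hz2
        rw [hTm] at ht
        rw [hRm] at hr
        apply hr.2
        have : r - g = (t - g) + a - b := by
          have : r = t + a - b := by rw [← hrb]; abel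
          rw [this]; abel
        rw [this]
        exact K.sub_mem (K.add_mem ht.2 (hAK a ha)) (hAK b hb)
      rw [← Finset.card_union_of_disjoint hd, add_comm A S]
      apply Finset.card_le_card
      apply Finset.union_subset <;> apply Finset.add_subset_add_right <;> exact Finset.filter_subset _ _
    have hRle : R.card ≤ (R + A).card := Finset.card_le_card_add_right ⟨0, h0⟩
    have hT2 : 2 ≤ T.card := by
      obtain ⟨a, ha, ha0, has⟩ := hrep g hg
      apply Finset.one_lt_card.2
      refine ⟨g, (hTm g).2 ⟨hg, by simp [K.zero_mem]⟩, g - a, (hTm _).2 ⟨has, ?_⟩, ?_⟩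
      · simpa using hAK a ha
      · intro h; exact ha0 (sub_eq_self.1 h.symm)
    have hTA : (T + A).card < T.card + A.card := by omega
    have hbig : (zfs K).card ≤ (T + A).card + 1 := by
      by_contra hcon
      have := z_coset hA hA3 h0 K rfl g (X := T) (fun x hx => ((hTm x).1 hx).2) hT2 (by omega)
      omega
    by_cases hfull : (zfs K).card ≤ (T + A).card
    · exact Or.inl hfull
    right
    refine ⟨by omega, ?_⟩
    -- missing element
    obtain ⟨z, hz, hzT⟩ : ∃ z ∈ g +ᵥ zfs K, z ∉ T + A := by
      by_contra hcon
      push Not at hcon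
      have := Finset.card_le_card (show g +ᵥ zfs K ⊆ T + A from hcon)
      rw [Finset.card_vadd_finset] at this
      omega
    have hTAK : T.card + A.card ≤ (zfs K).card := by
      have hd : Disjoint T (z +ᵥ (-A)) := by
        rw [Finset.disjoint_left]
        intro t ht ht2
        rw [z_mem_vadd, Finset.mem_neg'] at ht2
        apply hzT
        have := Finset.add_mem_add ht ht2
        simpa using this
      have hu : T ∪ (z +ᵥ (-A)) ⊆ g +ᵥ zfs K := by
        rw [z_mem_vadd, z_mem_fs] at hz
        apply Finset.union_subset
        · intro t ht
          rw [z_mem_vadd, z_mem_fs]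
          exact ((hTm t).1 ht).2
        · intro t ht
          rw [z_mem_vadd, Finset.mem_neg'] at ht
          rw [z_mem_vadd, z_mem_fs]
          have : t - g = (z - g) - (-(t - z)) := by abel
          rw [this]
          exact K.sub_mem hz (hAK _ ht)
      have h5 := Finset.card_le_card hu
      rw [Finset.card_union_of_disjoint hd, Finset.card_vadd_finset, Finset.card_vadd_finset,
        Finset.card_neg] at h5
      exact h5
    have hRA : (R + A).card ≤ R.card := by omega
    have hsub : R ⊆ R + A := by
      intro r hr
      have := Finset.add_mem_add hr h0
      simpa using this
    have hRe := Finset.eq_of_subset_of_card_le hsub hRA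
    intro r hr a ha
    rw [hRe]
    exact Finset.add_mem_add hr ha
  -- T_g + A is contained in g + K
  have hcos : ∀ g ∈ S, (S.filter (fun s => s - g ∈ K)) + A ⊆ g +ᵥ zfs K := by
    intro g hg z hz
    obtain ⟨t, ht, a, ha, rfl⟩ := Finset.mem_add.1 hz
    rw [Finset.mem_filter] at ht
    rw [z_mem_vadd, z_mem_fs]
    have : t + a - g = (t - g) + a := by abel
    rw [this]
    exact K.add_mem ht.2 (hAK a ha)
  have hTS : ∀ g ∈ S, (S.filter (fun s => s - g ∈ K)) + A ⊆ A + S := by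
    intro g hg
    rw [add_comm A S]
    exact Finset.add_subset_add_right (Finset.filter_subset _ _)
  by_cases hall : ∀ g ∈ S, (zfs K).card ≤ ((S.filter (fun s => s - g ∈ K)) + A).card
  · have : zfs K + S ⊆ A + S := by
      intro z hz
      obtain ⟨k, hk, s, hs, rfl⟩ := Finset.mem_add.1 hz
      apply hTS s hs
      rw [Finset.eq_of_subset_of_card_le (hcos s hs)
        (by rw [Finset.card_vadd_finset]; exact hall s hs), z_mem_vadd]
      simpa using hk
    have := Finset.card_le_card this
    omega
  · push Not at hall
    obtain ⟨g, hg, hlt⟩ := hall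
    rcases hloc g hg with h5 | ⟨h5, h6⟩
    · omega
    set T := S.filter (fun s => s - g ∈ K) with hT
    set R := S.filter (fun s => s - g ∉ K) with hR
    have hRK : ∀ k ∈ K, ∀ r ∈ R, r + k ∈ R := by
      intro k hk
      have hfin : K.toAddSubmonoid = AddSubmonoid.closure (A : Set G) := by
        rw [hKdef]
        exact AddSubgroup.closure_toAddSubmonoid_of_finite
      have hk' : k ∈ AddSubmonoid.closure (A : Set G) := by rw [← hfin]; exact hk
      induction hk' using AddSubmonoid.closure_induction with
      | mem x hx => exact fun r hr => h6 r hr x hx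
      | zero => intro r hr; simpa using hr
      | add x y hx hy ihx ihy =>
        intro r hr
        rw [← add_assoc]
        exact ihy (by rw [← hfin] at hy; exact hy) _ (ihx (by rw [← hfin] at hx; exact hx) r hr)
    have hcov : zfs K + S ⊆ (g +ᵥ zfs K) ∪ R := by
      intro z hz
      obtain ⟨k, hk, s, hs, rfl⟩ := Finset.mem_add.1 hz
      rw [Finset.mem_union]
      rw [z_mem_fs] at hk
      by_cases hsg : s - g ∈ K
      · left
        rw [z_mem_vadd, z_mem_fs, add_sub_assoc]
        exact K.add_mem hk hsg
      · right
        rw [add_comm]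
        exact hRK k hk s (by rw [hR, Finset.mem_filter]; exact ⟨hs, hsg⟩)
    have hd : Disjoint (T + A) R := by
      rw [Finset.disjoint_left]
      intro z hz hz2
      have := hcos g hg hz
      rw [z_mem_vadd, z_mem_fs] at this
      rw [hR, Finset.mem_filter] at hz2
      exact hz2.2 this
    have hin : (T + A) ∪ R ⊆ A + S := by
      apply Finset.union_subset (hTS g hg)
      intro r hr
      have := Finset.add_mem_add h0 (Finset.mem_filter.1 hr).1
      simpa using this
    have h7 := Finset.card_le_card hin
    rw [Finset.card_union_of_disjoint hd] at h7
    have h8 := Finset.card_le_card hcov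
    have h9 := Finset.card_union_le (g +ᵥ zfs K) R
    rw [Finset.card_vadd_finset] at h9
    omega

theorem z_adm_iff {S X : Finset G} (h0 : (0 : G) ∈ S) :
    (2 ≤ X.card ∧ (X + S).card ≤ Nat.card G - 2) ↔ ZAdm S X := by
  have : X.card ≤ (X + S).card := Finset.card_le_card_add_right ⟨0, h0⟩
  rw [Nat.card_eq_fintype_card]
  unfold ZAdm
  omega

theorem z_kappa {S A : Finset G} (h0 : (0 : G) ∈ S) (h : ZAtom S A) :
    kappa 2 S = (A + S).card - A.card := by
  have hA := (z_adm_iff h0).2 h.1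
  unfold kappa
  rw [if_pos ⟨A, hA⟩]
  apply le_antisymm
  · exact Nat.sInf_le ⟨A, hA.1, hA.2, rfl⟩
  · obtain ⟨X, hX1, hX2, hX3⟩ := Nat.sInf_mem
      (s := {d : ℕ | ∃ X : Finset G, 2 ≤ X.card ∧ (X + S).card ≤ Nat.card G - 2 ∧
        d = (X + S).card - X.card}) ⟨_, A, hA.1, hA.2, rfl⟩
    rw [hX3]
    have h1 := h.2.1 X ((z_adm_iff h0).1 ⟨hX1, hX2⟩)
    have : X.card ≤ (X + S).card := Finset.card_le_card_add_right ⟨0, h0⟩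
    omega

theorem z_frag {S A X : Finset G} (h0 : (0 : G) ∈ S) (h : ZAtom S A) (hX : ZAdm S X)
    (hle : (X + S).card + A.card ≤ (A + S).card + X.card) : IsFragment 2 S X := by
  have h1 := (z_adm_iff h0).2 hX
  refine ⟨h1.1, h1.2, ?_⟩
  rw [z_kappa h0 h]
  have h1 := h.2.1 X hX
  have : X.card ≤ (X + S).card := Finset.card_le_card_add_right ⟨0, h0⟩
  have : A.card ≤ (A + S).card := Finset.card_le_card_add_right ⟨0, h0⟩
  omega

theorem z_zmul {R : Finset G} {d : G} (hR : ∀ r ∈ R, r + d ∈ R) :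
    ∀ k ∈ AddSubgroup.zmultiples d, ∀ r ∈ R, r + k ∈ R := by
  intro k hk r hr
  have hk' : k ∈ AddSubmonoid.multiples d := mem_multiples_iff_mem_zmultiples.2 hk
  obtain ⟨n, rfl⟩ := AddSubmonoid.mem_multiples_iff _ _ |>.1 hk'
  clear hk hk'
  induction n with
  | zero => simpa using hr
  | succ n ih =>
    rw [succ_nsmul, ← add_assoc]
    exact hR _ ih

/-- one component -/
theorem z_ap {S : Finset G} {d s0 : G} (hs0 : s0 ∈ S) (hz : s0 + d ∉ S)
    (hstep : ∀ s ∈ S, s ≠ s0 → s + d ∈ S)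
    (hcos : ∀ s ∈ S, s - s0 ∈ AddSubgroup.zmultiples d) : IsAPWith (-d) S := by
  have hrepr : ∀ s, s - s0 ∈ AddSubgroup.zmultiples d → ∃ i : ℕ, s = s0 + i • (-d) := by
    intro s hs
    rw [← AddSubgroup.zmultiples_neg] at hs
    obtain ⟨n, hn⟩ := AddSubmonoid.mem_multiples_iff _ _ |>.1
      (mem_multiples_iff_mem_zmultiples.2 hs)
    exact ⟨n, by rw [hn]; abel⟩
  have hex : ∃ j : ℕ, s0 + j • (-d) ∉ S := by
    obtain ⟨j, hj⟩ := hrepr (s0 + d) (by simp)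
    exact ⟨j, by rw [← hj]; exact hz⟩
  set j := Nat.find hex with hj
  have hjn : s0 + j • (-d) ∉ S := Nat.find_spec hex
  have hjm : ∀ i < j, s0 + i • (-d) ∈ S := fun i hi => not_not.1 (Nat.find_min hex hi)
  have hS : S = (Finset.range j).image (fun i => s0 + (i : ℕ) • (-d)) := by
    ext s
    simp only [Finset.mem_image, Finset.mem_range]
    constructor
    · intro hs
      have hexs := hrepr s (hcos s hs)
      set i := Nat.find hexs with hi
      have his : s = s0 + i • (-d) := Nat.find_spec hexs
      refine ⟨i, ?_, his.symm⟩
      by_contra hij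
      push Not at hij
      have hgo : ∀ t, t ≤ i - j → s + t • d ∈ S := by
        intro t
        induction t with
        | zero => intro _; simpa using hs
        | succ t ih =>
          intro ht
          have h1 := ih (by omega)
          rw [succ_nsmul, ← add_assoc]
          apply hstep _ h1
          intro heq
          have h2 : s = s0 + t • (-d) := by rw [← heq]; simp
          exact Nat.find_min hexs (m := t) (by omega) h2
      apply hjn
      have h3 := hgo (i - j) le_rfl
      rw [his] at h3
      convert h3 using 1
      have : i • (-d) = j • (-d) + (i - j) • (-d) := by
        rw [← add_nsmul]; congr 1; omega
      rw [this, smul_neg (i - j) d]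
      abel
    · rintro ⟨i, hi, rfl⟩
      exact hjm i hi
  refine ⟨s0, j, ?_, hS⟩
  rw [hS, Finset.card_image_of_injOn, Finset.card_range]
  have key : ∀ i i' : ℕ, i < i' → i' < j → s0 + i • (-d) ≠ s0 + i' • (-d) := by
    intro i i' h1 h2 heq
    apply hz
    have h3 : i' • (-d) = i • (-d) + (i' - i - 1) • (-d) + (-d) := by
      rw [← add_nsmul, ← succ_nsmul]; congr 1; omega
    rw [h3] at heq
    have h4 : (i' - i - 1) • (-d) = d := by
      have h5 := add_left_cancel heq
      rw [add_assoc] at h5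
      have h6 := (left_eq_add.1 h5)
      rw [add_neg_eq_zero] at h6
      exact h6
    have := hjm (i' - i - 1) (by omega)
    rwa [h4] at this
  intro i hi i' hi' heq
  simp only [Finset.coe_range, Set.mem_Iio] at hi hi'
  by_contra hne
  rcases Nat.lt_or_gt_of_ne hne with h | h
  · exact key i i' h hi' heq
  · exact key i' i h hi heq.symm

theorem z_pair_case {S : Finset G} {d : G} (hd : d ≠ 0) (h0S : (0 : G) ∈ S)
    (hA : ZAtom S {0, d}) (hk : (({0, d} : Finset G) + S).card ≤ S.card + 1)
    (hsize : 2 * S.card ≤ Fintype.card G + 1)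
    (hnotAP : ¬ ∃ d : G, IsAPWith d S) :
    IsFragment 2 S (zfs (AddSubgroup.zmultiples d)) := by
  set H := AddSubgroup.zmultiples d with hH
  have hdH : d ∈ H := AddSubgroup.mem_zmultiples d
  have hA2 : ({0, d} : Finset G).card = 2 := Finset.card_pair hd.symm
  have hH2 : 2 ≤ (zfs H).card := by
    rw [← hA2]
    apply Finset.card_le_card
    intro x hx
    simp only [Finset.mem_insert, Finset.mem_singleton] at hx
    rw [z_mem_fs]
    rcases hx with rfl | rfl
    · exact H.zero_mem
    · exact hdH
  have hsubS : S ⊆ {0, d} + S := by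
    intro s hs
    have := Finset.add_mem_add (show (0 : G) ∈ ({0, d} : Finset G) by simp) hs
    simpa using this
  have hsubd : ∀ s ∈ S, s + d ∈ ({0, d} : Finset G) + S := by
    intro s hs
    have := Finset.add_mem_add (show d ∈ ({0, d} : Finset G) by simp) hs
    rwa [add_comm d s] at this
  have hSA := Finset.card_le_card hsubS
  have hadm := hA.1.2
  by_cases hst : ∀ s ∈ S, s + d ∈ S
  · have hHS : zfs H + S ⊆ S := by
      intro z hz
      obtain ⟨k, hk, s, hs, rfl⟩ := Finset.mem_add.1 hz
      rw [add_comm]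
      exact z_zmul hst k ((z_mem_fs _ _).1 hk) s hs
    have h1 := Finset.card_le_card hHS
    exact z_frag h0S hA ⟨hH2, by omega⟩ (by omega)
  push Not at hst
  obtain ⟨s0, hs0, hz⟩ := hst
  have heq : insert (s0 + d) S = {0, d} + S := by
    apply Finset.eq_of_subset_of_card_le
    · rw [Finset.insert_subset_iff]
      exact ⟨hsubd _ hs0, hsubS⟩
    · rw [Finset.card_insert_of_notMem hz]; exact hk
  have hcA : (({0, d} : Finset G) + S).card = S.card + 1 := by
    rw [← heq, Finset.card_insert_of_notMem hz]
  have hstep : ∀ s ∈ S, s ≠ s0 → s + d ∈ S := by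
    intro s hs hne
    have := hsubd s hs
    rw [← heq, Finset.mem_insert] at this
    rcases this with h | h
    · exact absurd (add_right_cancel h) hne
    · exact h
  by_cases hone : ∀ s ∈ S, s - s0 ∈ H
  · exact absurd ⟨-d, z_ap hs0 hz hstep hone⟩ hnotAP
  push Not at hone
  obtain ⟨r, hrS, hr⟩ := hone
  set T := S.filter (fun s => s - s0 ∈ H) with hT
  set R := S.filter (fun s => s - s0 ∉ H) with hR
  have hTR : T.card + R.card = S.card := Finset.card_filter_add_card_filter_not _
  have hRm : ∀ t, t ∈ R ↔ t ∈ S ∧ t - s0 ∉ H := fun t => by rw [hR, Finset.mem_filter]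
  have hT1 : 0 < T.card := Finset.card_pos.2 ⟨s0, by simp [hT, hs0, H.zero_mem]⟩
  have hRd : ∀ r ∈ R, r + d ∈ R := by
    intro r hr
    rw [hRm] at hr ⊢
    refine ⟨hstep r hr.1 ?_, ?_⟩
    · rintro rfl
      exact hr.2 (by simp [H.zero_mem])
    · intro h
      apply hr.2
      have := H.sub_mem h hdH
      convert this using 1
      abel
  have hRH := z_zmul hRd
  have hRc : (zfs H).card ≤ R.card := by
    rw [← Finset.card_vadd_finset r]
    apply Finset.card_le_card
    intro z hz
    rw [z_mem_vadd, z_mem_fs] at hz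
    have := hRH _ hz r ((hRm r).2 ⟨hrS, hr⟩)
    simpa using this
  have hcov : zfs H + S ⊆ (s0 +ᵥ zfs H) ∪ R := by
    intro z hz
    obtain ⟨k, hk, s, hs, rfl⟩ := Finset.mem_add.1 hz
    rw [Finset.mem_union]
    rw [z_mem_fs] at hk
    by_cases hsg : s - s0 ∈ H
    · left
      rw [z_mem_vadd, z_mem_fs, add_sub_assoc]
      exact H.add_mem hk hsg
    · right
      rw [add_comm]
      exact hRH k hk s ((hRm s).2 ⟨hs, hsg⟩)
  have h8 := Finset.card_le_card hcov
  have h9 := Finset.card_union_le (s0 +ᵥ zfs H) R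
  rw [Finset.card_vadd_finset] at h9
  have h10 := z_fs_compl H S (by omega)
  exact z_frag h0S hA ⟨hH2, by omega⟩ (by omega)

end

theorem stmt13 {G : Type*} [AddCommGroup G] [Fintype G] [DecidableEq G] (S : Finset G)
    (hgen : AddSubgroup.closure (S : Set G) = ⊤) (h0S : (0 : G) ∈ S)
    (hsep : KSeparable 2 S)
    (hsize : 2 * S.card ≤ Nat.card G + 1)
    (hk : kappa 2 S + 1 ≤ S.card)
    (hnotAP : ¬ ∃ d : G, IsAPWith d S) :
    ∃ (H : AddSubgroup G) (HF : Finset G), (HF : Set G) = (H : Set G) ∧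
      IsFragment 2 S HF := by
  obtain ⟨X, hX⟩ := hsep
  obtain ⟨A, hA, hA0⟩ := z_exists_atom ⟨0, h0S⟩ ((z_adm_iff h0S).1 hX)
  rw [z_kappa h0S hA] at hk
  rw [Nat.card_eq_fintype_card] at hsize
  have hle : A.card ≤ (A + S).card := Finset.card_le_card_add_right ⟨0, h0S⟩
  have hA2 := hA.1.1
  rcases z_subgroup_or_sidon hA hA0 with ⟨H, hH⟩ | hsid
  · exact ⟨H, A, hH, z_frag h0S hA hA.1 le_rfl⟩
  by_cases h3 : 3 ≤ A.card
  · exact (z_main hA hA0 (by omega) hsid h3).elim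
  have hc : A.card = 2 := by omega
  obtain ⟨d, hd, rfl⟩ : ∃ d, d ≠ 0 ∧ A = {0, d} := by
    have h1 : (A.erase 0).card = 1 := by rw [Finset.card_erase_of_mem hA0, hc]
    obtain ⟨d, hd⟩ := Finset.card_eq_one.1 h1
    have hdm : d ∈ A.erase 0 := by rw [hd]; simp
    refine ⟨d, (Finset.mem_erase.1 hdm).1, ?_⟩
    rw [← Finset.insert_erase hA0, hd]
  refine ⟨AddSubgroup.zmultiples d, zfs (AddSubgroup.zmultiples d), ?_,
    z_pair_case hd h0S hA (by omega) hsize hnotAP⟩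
  ext x
  rw [Finset.mem_coe, z_mem_fs]
  rfl
end

section
/- Let S be a finite generating subset of an abelian group G with 0 ∈ S, |S| ≤ (|G|+1)/2 and κ₂(S) ≤ |S| - 1. Let H be a hyper-atom of S (a subgroup of maximal cardinality which is a 1-fragment of S) and φ : G → G/H the canonical morphism. Then φ(S) is either an arithmetic progression in G/H or a Vosper subset of G/H. -/
open scoped Pointwise Classical

/-- `A` is a Vosper subset: for every `X` with `|X| ≥ 2`,
`|X + A| ≥ min (|G| - 1) (|X| + |A|)`. -/
def IsVosper {G : Type*} [AddCommGroup G] [DecidableEq G] (A : Finset G) : Prop :=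
  ∀ X : Finset G, 2 ≤ X.card → min (Nat.card G - 1) (X.card + A.card) ≤ (X + A).card

section helpers

set_option linter.unusedSectionVars false

variable {Q : Type*} [AddCommGroup Q] [Fintype Q] [DecidableEq Q]

/-- The finset of elements of a subgroup. -/
noncomputable def kf (K : AddSubgroup Q) : Finset Q := Finset.univ.filter (fun x => x ∈ K)

lemma mem_kf {K : AddSubgroup Q} {x : Q} : x ∈ kf K ↔ x ∈ K := by simp [kf]

/-- All translates of `M` meet in at most one point. -/
def Sid (M : Finset Q) : Prop := ∀ x : Q, x ≠ 0 → (M ∩ (x +ᵥ M)).card ≤ 1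

lemma add_subset_kf {K : AddSubgroup Q} {X Y : Finset Q} (hX : X ⊆ kf K) (hY : Y ⊆ kf K) :
    X + Y ⊆ kf K := by
  intro z hz
  obtain ⟨x, hx, y, hy, rfl⟩ := Finset.mem_add.1 hz
  exact mem_kf.2 (K.add_mem (mem_kf.1 (hX hx)) (mem_kf.1 (hY hy)))

lemma submod (X Y S : Finset Q) :
    ((X ∪ Y) + S).card + ((X ∩ Y) + S).card ≤ (X + S).card + (Y + S).card := by
  rw [Finset.union_add, ← Finset.card_union_add_card_inter (X + S) (Y + S)]
  have := Finset.card_le_card (Finset.inter_add_subset (s₁ := X) (s₂ := Y) (t := S))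
  omega

lemma atom (K : AddSubgroup Q) (S : Finset Q) (hS : S ⊆ kf K) (c : ℕ)
    (hX : ∃ X ⊆ kf K, 2 ≤ X.card ∧ (X + S).card + 2 ≤ (kf K).card ∧ (X + S).card ≤ X.card + c) :
    ∃ M ⊆ kf K, (0 : Q) ∈ M ∧ 2 ≤ M.card ∧ (M + S).card + 2 ≤ (kf K).card ∧
      (M + S).card ≤ M.card + c ∧ ((∃ N : AddSubgroup Q, kf N = M) ∨ Sid M) := by
  have hex : ∃ c, ∃ X ⊆ kf K, 2 ≤ X.card ∧ (X + S).card + 2 ≤ (kf K).card ∧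
      (X + S).card ≤ X.card + c := ⟨c, hX⟩
  obtain ⟨κ, hκ, hκmin⟩ : ∃ κ, (∃ X ⊆ kf K, 2 ≤ X.card ∧ (X + S).card + 2 ≤ (kf K).card ∧
      (X + S).card ≤ X.card + κ) ∧ ∀ c', (∃ X ⊆ kf K, 2 ≤ X.card ∧
      (X + S).card + 2 ≤ (kf K).card ∧ (X + S).card ≤ X.card + c') → κ ≤ c' :=
    ⟨Nat.find hex, Nat.find_spec hex, fun c' h => Nat.find_min' hex h⟩
  have hκc : κ ≤ c := hκmin c hX
  have hex2 : ∃ n, ∃ X ⊆ kf K, 2 ≤ X.card ∧ (X + S).card + 2 ≤ (kf K).card ∧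
      (X + S).card ≤ X.card + κ ∧ X.card = n := by
    obtain ⟨X, h1, h2, h3, h4⟩ := hκ
    exact ⟨_, X, h1, h2, h3, h4, rfl⟩
  obtain ⟨n, ⟨M0, hM0, hM02, hM0s, hM0κ, hM0n⟩, hnmin⟩ : ∃ n, (∃ X ⊆ kf K, 2 ≤ X.card ∧
      (X + S).card + 2 ≤ (kf K).card ∧ (X + S).card ≤ X.card + κ ∧ X.card = n) ∧
      ∀ n', (∃ X ⊆ kf K, 2 ≤ X.card ∧ (X + S).card + 2 ≤ (kf K).card ∧
      (X + S).card ≤ X.card + κ ∧ X.card = n') → n ≤ n' :=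
    ⟨Nat.find hex2, Nat.find_spec hex2, fun c' h => Nat.find_min' hex2 h⟩
  -- translate
  obtain ⟨m0, hm0⟩ : M0.Nonempty := Finset.card_pos.1 (by omega)
  obtain ⟨M, hMdef⟩ : ∃ M, M = (-m0) +ᵥ M0 := ⟨_, rfl⟩
  have hMcard : M.card = n := by rw [hMdef, Finset.card_vadd_finset, hM0n]
  have hMS : (M + S).card = (M0 + S).card := by
    rw [hMdef, vadd_add_assoc, Finset.card_vadd_finset]
  have hMK : M ⊆ kf K := by
    intro x hx
    rw [hMdef] at hx
    obtain ⟨y, hy, rfl⟩ := Finset.mem_vadd_finset.1 hx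
    exact mem_kf.2 (K.add_mem (K.neg_mem (mem_kf.1 (hM0 hm0))) (mem_kf.1 (hM0 hy)))
  have h0M : (0 : Q) ∈ M := by
    rw [hMdef]
    exact Finset.mem_vadd_finset.2 ⟨m0, hm0, by simp⟩
  -- duality
  have hdual : n + (M + S).card ≤ (kf K).card := by
    have hsub : M + S ⊆ kf K := add_subset_kf hMK hS
    have hZc : (-(kf K \ (M + S))).card = (kf K).card - (M + S).card := by
      rw [Finset.card_neg, Finset.card_sdiff_of_subset hsub]
    have hle := Finset.card_le_card hsub
    have hZK : -(kf K \ (M + S)) ⊆ kf K := by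
      intro z hz
      have := (Finset.mem_sdiff.1 (Finset.mem_neg'.1 hz)).1
      exact mem_kf.2 (by simpa using K.neg_mem (mem_kf.1 this))
    have hZS : (-(kf K \ (M + S)) + S).card ≤ (kf K).card - M.card := by
      have hnM : -M ⊆ kf K := by
        intro z hz
        exact mem_kf.2 (by simpa using K.neg_mem (mem_kf.1 (hMK (Finset.mem_neg'.1 hz))))
      rw [← Finset.card_neg M, ← Finset.card_sdiff_of_subset hnM]
      apply Finset.card_le_card
      intro z hz
      refine Finset.mem_sdiff.2 ⟨add_subset_kf hZK hS hz, ?_⟩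
      obtain ⟨x, hx, s, hs, rfl⟩ := Finset.mem_add.1 hz
      intro hm
      have h1 := (Finset.mem_sdiff.1 (Finset.mem_neg'.1 hx)).2
      apply h1
      refine Finset.mem_add.2 ⟨_, Finset.mem_neg'.1 hm, s, hs, by abel⟩
    have hMle := Finset.card_le_card hMK
    have := hnmin _ ⟨_, hZK, by omega, by omega, by omega, rfl⟩
    omega
  have hint : ∀ x : Q, 2 ≤ (M ∩ (x +ᵥ M)).card → x +ᵥ M = M := by
    intro x hx2
    by_contra hne
    obtain ⟨m, hm⟩ : (M ∩ (x +ᵥ M)).Nonempty := Finset.card_pos.1 (by omega)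
    have hxK : x ∈ K := by
      obtain ⟨h1, h2⟩ := Finset.mem_inter.1 hm
      obtain ⟨y, hy, rfl⟩ := Finset.mem_vadd_finset.1 h2
      have := K.sub_mem (mem_kf.1 (hMK h1)) (mem_kf.1 (hMK hy))
      simpa using this
    have hxMK : x +ᵥ M ⊆ kf K := by
      intro z hz
      obtain ⟨y, hy, rfl⟩ := Finset.mem_vadd_finset.1 hz
      exact mem_kf.2 (K.add_mem hxK (mem_kf.1 (hMK hy)))
    have hxM : (x +ᵥ M).card = n := by rw [Finset.card_vadd_finset, hMcard]
    have hxMS : ((x +ᵥ M) + S).card = (M + S).card := by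
      rw [vadd_add_assoc, Finset.card_vadd_finset]
    have hsm := submod M (x +ᵥ M) S
    have hui := Finset.card_union_add_card_inter M (x +ᵥ M)
    have hlt : (M ∩ (x +ᵥ M)).card < n := by
      rw [← hMcard]
      apply Finset.card_lt_card
      refine ⟨Finset.inter_subset_left, fun h => hne ?_⟩
      symm
      exact Finset.eq_of_subset_of_card_le (fun z hz => (Finset.mem_inter.1 (h hz)).2)
        (by omega)
    have hIS : (M ∩ (x +ᵥ M) + S).card ≤ (M + S).card :=
      Finset.card_le_card (Finset.add_subset_add_right Finset.inter_subset_left)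
    have hI : (M ∩ (x +ᵥ M)).card + κ + 1 ≤ (M ∩ (x +ᵥ M) + S).card := by
      by_contra hcon
      have := hnmin _ ⟨M ∩ (x +ᵥ M), Finset.inter_subset_left.trans hMK, hx2, by omega,
        by omega, rfl⟩
      omega
    have hκ1 : 1 ≤ κ := by
      by_contra hcon
      have : (M ∪ (x +ᵥ M)).card ≤ ((M ∪ (x +ᵥ M)) + S).card := by
        obtain ⟨s, hs⟩ : S.Nonempty := by
          by_contra hS0
          rw [Finset.not_nonempty_iff_eq_empty] at hS0
          subst hS0
          simp at hI
        exact Finset.card_le_card_add_right ⟨s, hs⟩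
      omega
    have := hκmin (κ - 1) ⟨M ∪ (x +ᵥ M), Finset.union_subset hMK hxMK, by omega, by omega,
      by omega⟩
    omega
  refine ⟨M, hMK, h0M, by omega, by omega, by omega, ?_⟩
  by_cases hst : ∃ y : Q, y ≠ 0 ∧ y +ᵥ M = M
  · left
    obtain ⟨y, hy0, hyM⟩ := hst
    have hall : ∀ m ∈ M, (-m) +ᵥ M = M := by
      intro m hm
      apply hint
      have hsub : ({0, y} : Finset Q) ⊆ M ∩ ((-m) +ᵥ M) := by
        have hyMem : ∀ z ∈ M, y + z ∈ M := fun z hz => by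
          have h1 : y + z ∈ y +ᵥ M := Finset.mem_vadd_finset.2 ⟨z, hz, rfl⟩
          rwa [hyM] at h1
        intro z hz
        rw [Finset.mem_insert, Finset.mem_singleton] at hz
        rcases hz with rfl | rfl
        · exact Finset.mem_inter.2 ⟨h0M, Finset.mem_vadd_finset.2 ⟨m, hm, by simp⟩⟩
        · refine Finset.mem_inter.2 ⟨by simpa using hyMem 0 h0M,
            Finset.mem_vadd_finset.2 ⟨z + m, hyMem m hm, by simp⟩⟩
      have := Finset.card_le_card hsub
      rwa [Finset.card_pair (Ne.symm hy0)] at this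
    have hsubm : ∀ m ∈ M, ∀ z ∈ M, z - m ∈ M := by
      intro m hm z hz
      rw [← hall m hm]
      exact Finset.mem_vadd_finset.2 ⟨z, hz, by simp; abel⟩
    have hneg : ∀ m ∈ M, -m ∈ M := fun m hm => by simpa using hsubm m hm 0 h0M
    refine ⟨{ carrier := M, zero_mem' := h0M, neg_mem' := fun {m} hm => hneg m hm,
              add_mem' := fun {a b} ha hb => by simpa using hsubm _ (hneg b hb) a ha }, ?_⟩
    ext z
    rw [mem_kf]
    exact Iff.rfl
  · right
    intro x hx
    by_contra hcon
    exact hst ⟨x, hx, hint x (by omega)⟩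

lemma sid_inter {M : Finset Q} (hM : Sid M) {x y : Q} (hxy : x ≠ y) :
    ((x +ᵥ M) ∩ (y +ᵥ M)).card ≤ 1 := by
  have h : (x +ᵥ M) ∩ (y +ᵥ M) = x +ᵥ (M ∩ ((y - x) +ᵥ M)) := by
    rw [Finset.vadd_finset_inter, vadd_vadd]
    simp
  rw [h, Finset.card_vadd_finset]
  exact hM _ (sub_ne_zero.2 hxy.symm)

lemma vadd_sub {M B : Finset Q} {x : Q} (hx : x ∈ B) : x +ᵥ M ⊆ M + B := by
  intro z hz
  obtain ⟨y, hy, rfl⟩ := Finset.mem_vadd_finset.1 hz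
  exact Finset.mem_add.2 ⟨y, hy, x, hx, by rw [vadd_eq_add, add_comm]⟩

lemma sid_two {M B : Finset Q} (hM : Sid M) (hB : 2 ≤ B.card) :
    2 * M.card ≤ (M + B).card + 1 := by
  obtain ⟨x, hx, y, hy, hxy⟩ := Finset.one_lt_card.1 hB
  have h1 := Finset.card_le_card (Finset.union_subset (vadd_sub (M := M) hx) (vadd_sub (M := M) hy))
  have h2 := Finset.card_union_add_card_inter (x +ᵥ M) (y +ᵥ M)
  have h3 := sid_inter hM hxy
  simp only [Finset.card_vadd_finset] at h2
  omega

lemma sid_three {M B : Finset Q} (hM : Sid M) (hB : 3 ≤ B.card) :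
    3 * M.card ≤ (M + B).card + 3 := by
  obtain ⟨x, y, z, hx, hy, hz, hxy, hxz, hyz⟩ := Finset.two_lt_card_iff.1 hB
  have h1 := Finset.card_le_card (Finset.union_subset (Finset.union_subset
    (vadd_sub (M := M) hx) (vadd_sub (M := M) hy)) (vadd_sub (M := M) hz))
  have h2 := Finset.card_union_add_card_inter (x +ᵥ M) (y +ᵥ M)
  have h4 := Finset.card_union_add_card_inter ((x +ᵥ M) ∪ (y +ᵥ M)) (z +ᵥ M)
  rw [Finset.union_inter_distrib_right] at h4
  have h5 := Finset.card_union_le ((x +ᵥ M) ∩ (z +ᵥ M)) ((y +ᵥ M) ∩ (z +ᵥ M))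
  have h3 := sid_inter hM hxy
  have h6 := sid_inter hM hxz
  have h7 := sid_inter hM hyz
  simp only [Finset.card_vadd_finset] at h2 h4
  omega

/-- Sidon-like sets are Vosper in the subgroup they generate. -/
lemma sid_vosper {M : Finset Q} (hM : Sid M) (hM3 : 3 ≤ M.card) (h0 : (0 : Q) ∈ M)
    (K : AddSubgroup Q) (hK : AddSubgroup.closure (M : Set Q) = K) (Y : Finset Q) (hY : Y ⊆ kf K)
    (hY2 : 2 ≤ Y.card) (hYM : (Y + M).card + 2 ≤ (kf K).card) :
    Y.card + M.card ≤ (Y + M).card := by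
  by_contra hcon
  have hMK : M ⊆ kf K := fun x hx => mem_kf.2 (hK ▸ AddSubgroup.subset_closure hx)
  obtain ⟨N, hNK, h0N, hN2, hNM, hNc, hN⟩ := atom K M hMK (M.card - 1)
    ⟨Y, hY, hY2, hYM, by omega⟩
  rw [add_comm N M] at hNM hNc
  have htwo := sid_two hM hN2
  rcases hN with ⟨L, rfl⟩ | hN
  · have hML : M ⊆ kf L := by
      intro y hy
      by_contra hyL
      have hd : Disjoint (kf L) (y +ᵥ kf L) := by
        rw [Finset.disjoint_left]
        intro z hz hz'
        obtain ⟨w, hw, rfl⟩ := Finset.mem_vadd_finset.1 hz'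
        apply hyL
        have := L.sub_mem (mem_kf.1 hz) (mem_kf.1 hw)
        exact mem_kf.2 (by simpa using this)
      have hs : kf L ∪ (y +ᵥ kf L) ⊆ M + kf L := by
        apply Finset.union_subset
        · intro z hz
          exact Finset.mem_add.2 ⟨0, h0, z, hz, zero_add z⟩
        · intro z hz
          obtain ⟨w, hw, rfl⟩ := Finset.mem_vadd_finset.1 hz
          exact Finset.mem_add.2 ⟨y, hy, w, hw, rfl⟩
      have h1 := Finset.card_le_card hs
      rw [Finset.card_union_of_disjoint hd, Finset.card_vadd_finset] at h1
      omega
    have hKL : K ≤ L := by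
      rw [← hK, AddSubgroup.closure_le]
      exact fun x hx => mem_kf.1 (hML hx)
    have h1 : kf K ⊆ M + kf L := fun z hz =>
      Finset.mem_add.2 ⟨0, h0, z, mem_kf.2 (hKL (mem_kf.1 hz)), zero_add z⟩
    have := Finset.card_le_card h1
    omega
  · by_cases hN3 : 3 ≤ N.card
    · have h1 := sid_three hM hN3
      have h2 := sid_three hN hM3
      rw [add_comm N M] at h2
      omega
    · omega

lemma sid_kappa1 {M : Finset Q} (hM : Sid M) (hM3 : 3 ≤ M.card) (h0 : (0 : Q) ∈ M)
    (K : AddSubgroup Q) (hK : AddSubgroup.closure (M : Set Q) = K) (Y : Finset Q) (hY : Y ⊆ kf K)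
    (hYn : Y.Nonempty) (hYM : (Y + M).card < (kf K).card) :
    Y.card + M.card ≤ (Y + M).card + 1 := by
  have hMK : M ⊆ kf K := fun x hx => mem_kf.2 (hK ▸ AddSubgroup.subset_closure hx)
  by_cases hY2 : 2 ≤ Y.card
  · by_cases h2 : (Y + M).card + 2 ≤ (kf K).card
    · have := sid_vosper hM hM3 h0 K hK Y hY hY2 h2
      omega
    · obtain ⟨g, hg, hg'⟩ : ∃ g ∈ kf K, g ∉ Y + M := by
        by_contra hcon
        push Not at hcon
        have := Finset.card_le_card (show kf K ⊆ Y + M from hcon)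
        omega
      have hd : Disjoint Y (M.image (fun m => g - m)) := by
        rw [Finset.disjoint_left]
        intro z hz hz'
        obtain ⟨m, hm, rfl⟩ := Finset.mem_image.1 hz'
        exact hg' (Finset.mem_add.2 ⟨_, hz, m, hm, by abel⟩)
      have hs : Y ∪ (M.image (fun m => g - m)) ⊆ kf K := by
        apply Finset.union_subset hY
        intro z hz
        obtain ⟨m, hm, rfl⟩ := Finset.mem_image.1 hz
        exact mem_kf.2 (K.sub_mem (mem_kf.1 hg) (mem_kf.1 (hMK hm)))
      have h1 := Finset.card_le_card hs
      rw [Finset.card_union_of_disjoint hd, Finset.card_image_of_injective _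
        (fun a b h => by simpa using h)] at h1
      omega
  · have : M.card ≤ (Y + M).card := Finset.card_le_card_add_left hYn
    omega

lemma closed_of_closure (B : Finset Q) (M : Set Q) (h : ∀ m ∈ M, ∀ b ∈ B, b + m ∈ B) :
    ∀ k ∈ AddSubgroup.closure M, ∀ b ∈ B, b + k ∈ B := by
  intro k hk
  induction hk using AddSubgroup.closure_induction with
  | mem x hx => exact h x hx
  | zero => intro b hb; simpa using hb
  | add x y _ _ hx hy => intro b hb; rw [← add_assoc]; exact hy _ (hx b hb)
  | neg x _ hx =>
    intro b hb
    have himg : B.image (fun b => b + x) = B :=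
      Finset.eq_of_subset_of_card_le (fun z hz => by
        obtain ⟨b, hb, rfl⟩ := Finset.mem_image.1 hz
        exact hx b hb) (by rw [Finset.card_image_of_injective _ (add_left_injective x)])
    rw [← himg] at hb
    obtain ⟨c, hc, rfl⟩ := Finset.mem_image.1 hb
    simpa using hc

lemma coset_bound (A : Finset Q) (K : AddSubgroup Q) (a : Q) (ha : a ∈ A)
    (h : ∀ b ∈ A, b - a ∉ K → ∀ k ∈ K, b + k ∈ A) :
    (kf K + A).card + 1 ≤ (kf K).card + A.card := by
  have hs : kf K + A ⊆ A ∪ (a +ᵥ kf K) := by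
    intro z hz
    obtain ⟨k, hk, b, hb, rfl⟩ := Finset.mem_add.1 hz
    by_cases hbK : b - a ∈ K
    · refine Finset.mem_union_right _ (Finset.mem_vadd_finset.2 ⟨k + (b - a), ?_, ?_⟩)
      · exact mem_kf.2 (K.add_mem (mem_kf.1 hk) hbK)
      · simp only [vadd_eq_add]; abel
    · refine Finset.mem_union_left _ ?_
      rw [add_comm]
      exact h b hb hbK k (mem_kf.1 hk)
  have h1 := Finset.card_le_card hs
  have h2 := Finset.card_union_add_card_inter A (a +ᵥ kf K)
  have h3 : 1 ≤ (A ∩ (a +ᵥ kf K)).card := Finset.card_pos.2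
    ⟨a, Finset.mem_inter.2 ⟨ha, Finset.mem_vadd_finset.2 ⟨0, mem_kf.2 K.zero_mem, by simp⟩⟩⟩
  rw [Finset.card_vadd_finset] at h2
  omega

lemma ap_of_one_start (A : Finset Q) (d a : Q) (ha : a ∈ A) (hA : A ≠ Finset.univ)
    (hd : AddSubgroup.closure ({d} : Set Q) = ⊤)
    (h : ∀ b ∈ A, b ≠ a → b - d ∈ A) : IsAPWith d A := by
  -- closure under `-d` forces everything
  have hall : ∀ B : Finset Q, B.Nonempty → (∀ b ∈ B, b - d ∈ B) → B = Finset.univ := by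
    intro B ⟨b0, hb0⟩ hB
    have hcl := closed_of_closure B {-d} (by
      intro m hm b hb
      rw [Set.mem_singleton_iff.1 hm, ← sub_eq_add_neg]
      exact hB b hb)
    ext z
    simp only [Finset.mem_univ, iff_true]
    have hz : z - b0 ∈ AddSubgroup.closure ({-d} : Set Q) := by
      have : AddSubgroup.closure ({d} : Set Q) ≤ AddSubgroup.closure ({-d} : Set Q) := by
        rw [AddSubgroup.closure_le]
        intro x hx
        rw [Set.mem_singleton_iff.1 hx]
        have := AddSubgroup.subset_closure (Set.mem_singleton (-d))
        simpa using (AddSubgroup.closure ({-d} : Set Q)).neg_mem this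
      rw [hd] at this
      exact this trivial
    simpa using hcl _ hz b0 hb0
  have hex : ∃ k : ℕ, a + k • d ∉ A := by
    by_contra hcon
    push Not at hcon
    apply hA
    ext z
    simp only [Finset.mem_univ, iff_true]
    have hz : z - a ∈ AddSubgroup.closure ({d} : Set Q) := by rw [hd]; trivial
    rw [← AddSubgroup.zmultiples_eq_closure, ← mem_multiples_iff_mem_zmultiples] at hz
    obtain ⟨k, hk⟩ := hz
    have := hcon k
    simp only at hk
    rw [hk] at this
    simpa using this
  obtain ⟨k, hk, hkmin⟩ : ∃ k : ℕ, a + k • d ∉ A ∧ ∀ j < k, a + j • d ∈ A :=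
    ⟨Nat.find hex, Nat.find_spec hex, fun j hj => by simpa using Nat.find_min hex hj⟩
  have hk0 : 0 < k := by
    rcases Nat.eq_zero_or_pos k with rfl | h
    · simp at hk; exact absurd ha hk
    · exact h
  have hAeq : A = (Finset.range k).image (fun i => a + (i : ℕ) • d) := by
    apply Finset.Subset.antisymm
    · by_contra hcon
      have hne : (A \ (Finset.range k).image (fun i => a + (i : ℕ) • d)).Nonempty := by
        rw [Finset.nonempty_iff_ne_empty, Ne, Finset.sdiff_eq_empty_iff_subset]
        exact hcon
      have := hall _ hne (by
        intro b hb
        obtain ⟨hb1, hb2⟩ := Finset.mem_sdiff.1 hb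
        refine Finset.mem_sdiff.2 ⟨h b hb1 ?_, ?_⟩
        · rintro rfl
          exact hb2 (Finset.mem_image.2 ⟨0, Finset.mem_range.2 hk0, by simp⟩)
        · intro hm
          obtain ⟨j, hj, hjb⟩ := Finset.mem_image.1 hm
          have hbj : b = a + (j + 1) • d := by
            rw [succ_nsmul, ← add_assoc, hjb]; abel
          rcases Nat.lt_or_ge (j + 1) k with hlt | hge
          · exact hb2 (Finset.mem_image.2 ⟨j + 1, Finset.mem_range.2 hlt, hbj.symm⟩)
          · have : j + 1 = k := by have := Finset.mem_range.1 hj; omega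
            rw [this] at hbj
            exact hk (hbj ▸ hb1))
      have ha' : a ∈ A \ (Finset.range k).image (fun i => a + (i : ℕ) • d) := by
        rw [this]; exact Finset.mem_univ _
      exact (Finset.mem_sdiff.1 ha').2
        (Finset.mem_image.2 ⟨0, Finset.mem_range.2 hk0, by simp⟩)
    · intro z hz
      obtain ⟨j, hj, rfl⟩ := Finset.mem_image.1 hz
      exact hkmin j (Finset.mem_range.1 hj)
  have hinj : ∀ i j : ℕ, i < j → j < k → a + i • d ≠ a + j • d := by
    intro i j hij hjk heq
    have h1 : i • d = j • d := add_left_cancel heq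
    apply hk
    have h2 : k • d = (k - j + i) • d := by
      rw [add_nsmul, h1, ← add_nsmul]; congr 1; omega
    rw [h2]
    exact hkmin _ (by omega)
  refine ⟨a, k, ?_, hAeq⟩
  rw [hAeq, Finset.card_image_of_injOn, Finset.card_range]
  intro i hi j hj hij
  have hi' := Finset.mem_range.1 (Finset.mem_coe.1 hi)
  have hj' := Finset.mem_range.1 (Finset.mem_coe.1 hj)
  rcases lt_trichotomy i j with hlt | heq | hgt
  · exact absurd hij (hinj i j hlt hj')
  · exact heq
  · exact absurd hij.symm (hinj j i hgt hi')

lemma two_mul_kf_le {K : AddSubgroup Q} (hK : K ≠ ⊤) : 2 * (kf K).card ≤ Fintype.card Q := by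
  obtain ⟨y, hy⟩ : ∃ y, y ∉ K := by
    by_contra hcon
    push Not at hcon
    exact hK ((AddSubgroup.eq_top_iff' K).2 hcon)
  have hd : Disjoint (kf K) (y +ᵥ kf K) := by
    rw [Finset.disjoint_left]
    intro z hz hz'
    obtain ⟨w, hw, rfl⟩ := Finset.mem_vadd_finset.1 hz'
    apply hy
    simpa using K.sub_mem (mem_kf.1 hz) (mem_kf.1 hw)
  have := Finset.card_le_univ (kf K ∪ (y +ᵥ kf K))
  rw [Finset.card_union_of_disjoint hd, Finset.card_vadd_finset] at this
  omega

theorem core (A : Finset Q) (h0 : (0 : Q) ∈ A)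
    (hsize : 2 * A.card ≤ Fintype.card Q + 1)
    (hκ : ∀ X : Finset Q, X.Nonempty → (X + A).card < Fintype.card Q →
      X.card + A.card ≤ (X + A).card + 1)
    (hsub : ∀ K : AddSubgroup Q, K ≠ ⊥ → (kf K + A).card < Fintype.card Q →
      (kf K).card + A.card ≤ (kf K + A).card)
    (hA2 : 2 ≤ A.card) (hV : ¬ IsVosper A) : ∃ d : Q, IsAPWith d A := by
  unfold IsVosper at hV
  push Not at hV
  obtain ⟨X, hX2, hXlt⟩ := hV
  rw [Nat.card_eq_fintype_card] at hXlt
  obtain ⟨hX3, hX4⟩ := lt_min_iff.1 hXlt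
  have hAn : A.Nonempty := ⟨0, h0⟩
  have hApos := Finset.card_pos.2 hAn
  have htop : (kf (⊤ : AddSubgroup Q)) = Finset.univ := by ext z; simp [mem_kf]
  have htopc : (kf (⊤ : AddSubgroup Q)).card = Fintype.card Q := by rw [htop, Finset.card_univ]
  have hZ : ∀ K : AddSubgroup Q, K ≠ ⊥ → (kf K + A).card + 1 ≤ (kf K).card + A.card → K = ⊤ := by
    intro K hK h
    by_contra hT
    have h1 := two_mul_kf_le hT
    have h2 := hsub K hK
    have h3 := Finset.card_le_univ (kf K + A)
    omega
  obtain ⟨M, -, h0M, hM2, hMs, hMc, hM⟩ := atom (⊤ : AddSubgroup Q) A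
    (by rw [htop]; exact Finset.subset_univ _) (A.card - 1)
    ⟨X, by rw [htop]; exact Finset.subset_univ _, hX2, by omega, by omega⟩
  rw [htopc] at hMs
  obtain ⟨m, hm, hm0⟩ : ∃ m ∈ M, m ≠ 0 := Finset.exists_mem_ne (by omega) 0
  rcases hM with ⟨N, rfl⟩ | hM
  · exfalso
    have := hsub N (by rintro rfl; exact hm0 (by simpa [mem_kf] using hm)) (by omega)
    omega
  by_cases hM3 : 3 ≤ M.card
  · exfalso
    obtain ⟨K, hK⟩ : ∃ K, AddSubgroup.closure (M : Set Q) = K := ⟨_, rfl⟩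
    have hMK : M ⊆ kf K := fun x hx => mem_kf.2 (hK ▸ AddSubgroup.subset_closure hx)
    have hKbot : K ≠ ⊥ := by
      rintro rfl
      exact hm0 (by simpa [mem_kf] using hMK hm)
    have hKt : K = ⊤ := by
      apply hZ K hKbot
      by_cases hcase : ∃ a ∈ A, ((A.filter (fun b => b - a ∈ K)) + M).card < (kf K).card
      · obtain ⟨a, ha, hlt⟩ := hcase
        set A1 := A.filter (fun b => b - a ∈ K) with hA1
        set A2 := A.filter (fun b => ¬ (b - a ∈ K)) with hA2'
        have hcards : A1.card + A2.card = A.card := Finset.card_filter_add_card_filter_not _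
        have ha1 : a ∈ A1 := by simp [hA1, ha]
        have hb1 : A1.card + M.card ≤ (A1 + M).card + 1 := by
          have h := sid_kappa1 hM hM3 h0M K hK ((-a) +ᵥ A1) (by
              intro z hz
              obtain ⟨w, hw, rfl⟩ := Finset.mem_vadd_finset.1 hz
              have := (Finset.mem_filter.1 hw).2
              rw [mem_kf, vadd_eq_add, neg_add_eq_sub]
              exact this) ⟨(-a) +ᵥ a, Finset.vadd_mem_vadd_finset ha1⟩
              (by rw [vadd_add_assoc, Finset.card_vadd_finset]; exact hlt)
          rw [vadd_add_assoc, Finset.card_vadd_finset, Finset.card_vadd_finset] at h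
          exact h
        have hdis : Disjoint (A1 + M) (A2 + M) := by
          rw [Finset.disjoint_left]
          intro z hz hz'
          obtain ⟨b, hb, x, hx, rfl⟩ := Finset.mem_add.1 hz
          obtain ⟨c, hc, y, hy, hcy⟩ := Finset.mem_add.1 hz'
          apply (Finset.mem_filter.1 hc).2
          have h1 := (Finset.mem_filter.1 hb).2
          have h2 := K.sub_mem (mem_kf.1 (hMK hx)) (mem_kf.1 (hMK hy))
          have h3 := K.add_mem h1 h2
          have : c - a = b - a + (x - y) := by
            rw [eq_sub_of_add_eq hcy]; abel
          rw [this]; exact h3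
        have hun : (A1 + M) ∪ (A2 + M) ⊆ M + A := by
          rw [add_comm M A]
          exact Finset.union_subset (Finset.add_subset_add_right (Finset.filter_subset _ _))
            (Finset.add_subset_add_right (Finset.filter_subset _ _))
        have hc := Finset.card_le_card hun
        rw [Finset.card_union_of_disjoint hdis] at hc
        have hA2s : A2 ⊆ A2 + M := fun z hz => Finset.mem_add.2 ⟨z, hz, 0, h0M, add_zero z⟩
        have hA2e : A2 = A2 + M := Finset.eq_of_subset_of_card_le hA2s (by omega)
        have hcl := closed_of_closure A2 (M : Set Q) (by
          intro m hm b hb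
          rw [hA2e]
          exact Finset.mem_add.2 ⟨b, hb, m, hm, rfl⟩)
        rw [hK] at hcl
        apply coset_bound A K a ha
        intro b hb hbK k hk
        exact (Finset.mem_filter.1 (hcl k hk b (Finset.mem_filter.2 ⟨hb, hbK⟩))).1
      · push Not at hcase
        have hs : kf K + A ⊆ M + A := by
          intro z hz
          obtain ⟨k, hk, a, ha, rfl⟩ := Finset.mem_add.1 hz
          have hss : A.filter (fun b => b - a ∈ K) + M ⊆ a +ᵥ kf K := by
            intro w hw
            obtain ⟨b, hb, x, hx, rfl⟩ := Finset.mem_add.1 hw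
            refine Finset.mem_vadd_finset.2 ⟨b - a + x, mem_kf.2 (K.add_mem
              (Finset.mem_filter.1 hb).2 (mem_kf.1 (hMK hx))), ?_⟩
            simp only [vadd_eq_add]; abel
          have he := Finset.eq_of_subset_of_card_le hss
            (by rw [Finset.card_vadd_finset]; exact hcase a ha)
          have : k + a ∈ a +ᵥ kf K := Finset.mem_vadd_finset.2 ⟨k, hk, by
            simp only [vadd_eq_add]; abel⟩
          rw [← he] at this
          rw [add_comm M A]
          exact Finset.add_subset_add_right (Finset.filter_subset _ _) this
        have h1 := Finset.card_le_card hs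
        have h2 := Finset.card_le_card hMK
        omega
    subst hKt
    have := sid_vosper hM hM3 h0M ⊤ hK A (by rw [htop]; exact Finset.subset_univ _) hA2
      (by rw [htopc, add_comm A M]; exact hMs)
    rw [add_comm A M] at this
    omega
  · -- `M = {0, m}`
    have hMe : M = {0, m} := by
      symm
      apply Finset.eq_of_subset_of_card_le
      · intro z hz
        rw [Finset.mem_insert, Finset.mem_singleton] at hz
        rcases hz with rfl | rfl <;> assumption
      · rw [Finset.card_pair (Ne.symm hm0)]; omega
    have hAne : A ≠ Finset.univ := by
      rintro rfl
      rw [Finset.card_univ] at hsize hMc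
      have : Fintype.card Q ≤ (M + Finset.univ : Finset Q).card := by
        rw [← Finset.card_univ]; exact Finset.card_le_card_add_left ⟨0, h0M⟩
      omega
    have hMA : M + A = A ∪ (m +ᵥ A) := by
      rw [hMe, Finset.insert_eq, Finset.union_add, Finset.singleton_add,
        Finset.singleton_add]
      simp [Finset.vadd_finset_def]
    have hcard1 : (A \ (m +ᵥ A)).card ≤ 1 := by
      have h1 := Finset.card_sdiff_add_card A (m +ᵥ A)
      rw [← hMA, Finset.card_vadd_finset] at h1
      omega
    have hstart : ∃ a ∈ A, ∀ b ∈ A, b ≠ a → b - m ∈ A := by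
      have hkey : ∀ b ∈ A, b ∉ A \ (m +ᵥ A) → b - m ∈ A := by
        intro b hb hb'
        have : b ∈ m +ᵥ A := by
          by_contra hcon
          exact hb' (Finset.mem_sdiff.2 ⟨hb, hcon⟩)
        obtain ⟨c, hc, rfl⟩ := Finset.mem_vadd_finset.1 this
        simpa using hc
      by_cases hne : (A \ (m +ᵥ A)).Nonempty
      · obtain ⟨a, ha⟩ := hne
        refine ⟨a, (Finset.mem_sdiff.1 ha).1, fun b hb hba => hkey b hb fun hb' => hba ?_⟩
        exact Finset.card_le_one.1 hcard1 b hb' a ha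
      · refine ⟨0, h0, fun b hb _ => hkey b hb fun hb' => hne ⟨b, hb'⟩⟩
    obtain ⟨a, ha, hstart⟩ := hstart
    have hKt : AddSubgroup.closure ({m} : Set Q) = ⊤ := by
      apply hZ
      · intro h
        rw [AddSubgroup.closure_eq_bot_iff] at h
        exact hm0 (by simpa using h)
      · apply coset_bound A _ a ha
        intro b hb hbK k hk
        have hcl := closed_of_closure
          (A.filter (fun b => ¬ (b - a ∈ AddSubgroup.closure ({m} : Set Q)))) {-m} (by
            intro x hx b hb
            rw [Set.mem_singleton_iff.1 hx, ← sub_eq_add_neg]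
            obtain ⟨hb1, hb2⟩ := Finset.mem_filter.1 hb
            refine Finset.mem_filter.2 ⟨hstart b hb1 ?_, ?_⟩
            · rintro rfl
              exact hb2 (by simp)
            · intro hmem
              apply hb2
              have := AddSubgroup.add_mem _ hmem
                (AddSubgroup.subset_closure (Set.mem_singleton m))
              convert this using 1
              abel)
        have hk' : k ∈ AddSubgroup.closure ({-m} : Set Q) := by
          have : AddSubgroup.closure ({m} : Set Q) ≤ AddSubgroup.closure ({-m} : Set Q) := by
            rw [AddSubgroup.closure_le]
            intro x hx
            rw [Set.mem_singleton_iff.1 hx]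
            have := AddSubgroup.subset_closure (Set.mem_singleton (-m))
            simpa using (AddSubgroup.closure ({-m} : Set Q)).neg_mem this
          exact this hk
        exact (Finset.mem_filter.1 (hcl k hk' b (Finset.mem_filter.2 ⟨hb, hbK⟩))).1
    exact ⟨m, ap_of_one_start A m a ha hAne hKt hstart⟩

end helpers

theorem stmt14 {G : Type*} [AddCommGroup G] [Fintype G] [DecidableEq G] (S : Finset G)
    (hgen : AddSubgroup.closure (S : Set G) = ⊤) (h0S : (0 : G) ∈ S)
    (hsize : 2 * S.card ≤ Nat.card G + 1)
    (hk : kappa 2 S + 1 ≤ S.card)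
    (H : AddSubgroup G) (hH : IsHyperAtom S H) :
    (∃ d : G ⧸ H, IsAPWith d (S.image (QuotientAddGroup.mk' H))) ∨
      IsVosper (S.image (QuotientAddGroup.mk' H)) := by
  obtain ⟨⟨HF, hHF, hfr1, hfr2, hfr3⟩, hmax⟩ := hH
  by_cases hV : IsVosper (S.image (QuotientAddGroup.mk' H))
  · exact Or.inr hV
  left
  by_cases hA2 : 2 ≤ (S.image (QuotientAddGroup.mk' H)).card
  swap
  · have h0 : (0 : G ⧸ H) ∈ S.image (QuotientAddGroup.mk' H) :=
      Finset.mem_image.2 ⟨0, h0S, map_zero _⟩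
    have h1 := Finset.card_pos.2 ⟨_, h0⟩
    obtain ⟨a, ha⟩ := Finset.card_eq_one.1
      (show (S.image (QuotientAddGroup.mk' H)).card = 1 by omega)
    refine ⟨0, a, 1, by omega, ?_⟩
    rw [ha]
    simp
  have hHFk : HF = kf H := by
    ext z
    rw [mem_kf, ← Finset.mem_coe, hHF]
    exact Iff.rfl
  subst hHFk
  obtain ⟨A, hAdef⟩ : ∃ A, A = S.image (QuotientAddGroup.mk' H) := ⟨_, rfl⟩
  rw [← hAdef] at hV hA2 ⊢
  have : Fintype (G ⧸ H) := Fintype.ofFinite _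
  -- preimages
  let P : Finset (G ⧸ H) → Finset G := fun X =>
    Finset.univ.filter (fun g => QuotientAddGroup.mk' H g ∈ X)
  have memP : ∀ X g, g ∈ P X ↔ QuotientAddGroup.mk' H g ∈ X := by
    intro X g
    exact Finset.mem_filter.trans (and_iff_right (Finset.mem_univ g))
  have hfib : ∀ q : G ⧸ H,
      (Finset.univ.filter (fun g => QuotientAddGroup.mk' H g = q)).card = (kf H).card := by
    intro q
    obtain ⟨a, rfl⟩ := QuotientAddGroup.mk'_surjective H q
    rw [← Finset.card_vadd_finset a (kf H)]
    congr 1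
    ext g
    simp only [Finset.mem_filter, Finset.mem_univ, true_and]
    rw [Finset.mem_vadd_finset]
    constructor
    · intro h
      refine ⟨-a + g, mem_kf.2 ?_, by simp⟩
      exact QuotientAddGroup.eq.1 h.symm
    · rintro ⟨y, hy, rfl⟩
      symm
      apply QuotientAddGroup.eq.2
      simpa using mem_kf.1 hy
  have cardP : ∀ X, (P X).card = X.card * (kf H).card := by
    intro X
    rw [Finset.card_eq_sum_card_fiberwise (f := QuotientAddGroup.mk' H) (t := X)
      (fun g hg => (memP X g).1 hg)]
    rw [Finset.sum_const_nat]
    intro q hq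
    rw [← hfib q]
    congr 1
    ext g
    simp only [Finset.mem_filter, Finset.mem_univ, true_and, memP]
    constructor
    · exact fun h => h.2
    · intro h; exact ⟨h ▸ hq, h⟩
  have addP : ∀ X, P X + S = P (X + A) := by
    intro X
    ext g
    rw [memP]
    constructor
    · intro hg
      obtain ⟨x, hx, s, hs, rfl⟩ := Finset.mem_add.1 hg
      rw [map_add]
      exact Finset.add_mem_add ((memP X x).1 hx) (hAdef ▸ Finset.mem_image_of_mem _ hs)
    · intro hg
      obtain ⟨x, hx, a, ha, hxa⟩ := Finset.mem_add.1 hg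
      rw [hAdef] at ha
      obtain ⟨s, hs, rfl⟩ := Finset.mem_image.1 ha
      refine Finset.mem_add.2 ⟨g - s, (memP X _).2 ?_, s, hs, by abel⟩
      rw [map_sub, ← hxa]
      simpa using hx
  have hPz : P {0} = kf H := by
    ext g
    rw [memP, mem_kf, Finset.mem_singleton]
    exact QuotientAddGroup.eq_zero_iff g
  have hHS : (kf H + S).card = A.card * (kf H).card := by
    rw [← hPz, addP, cardP, hPz]
    simp
  have hGc : Nat.card G = Fintype.card (G ⧸ H) * (kf H).card := by
    rw [Nat.card_eq_fintype_card, ← Finset.card_univ, ← Finset.card_univ, ← cardP]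
    congr 1
    ext g
    simp [memP]
  obtain ⟨h, hh⟩ : ∃ h, h = (kf H).card := ⟨_, rfl⟩
  obtain ⟨n, hn⟩ : ∃ n, n = Fintype.card (G ⧸ H) := ⟨_, rfl⟩
  rw [← hh] at hfr1 hfr3 hHS hGc cardP
  rw [hHS] at hfr3
  rw [← hn] at hGc
  have hκmin : ∀ X : Finset G, 1 ≤ X.card → (X + S).card ≤ Nat.card G - 1 →
      kappa 1 S ≤ (X + S).card - X.card := by
    intro X h1 h2
    unfold kappa
    rw [if_pos ⟨X, h1, h2⟩]
    exact Nat.sInf_le ⟨X, h1, h2, rfl⟩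
  have hAc : kappa 1 S + h = A.card * h := by
    have : 1 * h ≤ A.card * h := Nat.mul_le_mul_right _ (by omega)
    omega
  have hlt : ∀ X : Finset (G ⧸ H), (X + A).card < n → (P X + S).card ≤ Nat.card G - 1 := by
    intro X hX
    rw [addP, cardP, hGc]
    have : (X + A).card * h < n * h := Nat.mul_lt_mul_of_pos_right hX (by omega)
    omega
  have hAn : A.Nonempty := Finset.card_pos.1 (by omega)
  have hbound : ∀ X : Finset (G ⧸ H), X.Nonempty → (X + A).card < n →
      X.card + A.card ≤ (X + A).card + 1 := by
    intro X hX hXn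
    have hXpos := Finset.card_pos.2 hX
    have h1 := hκmin (P X) (by rw [cardP]; exact Nat.mul_pos hXpos (by omega)) (hlt X hXn)
    rw [addP, cardP, cardP] at h1
    have h2 : X.card * h ≤ (X + A).card * h :=
      Nat.mul_le_mul_right _ (Finset.card_le_card_add_right hAn)
    have h3 : (X.card + A.card) * h ≤ ((X + A).card + 1) * h := by
      rw [add_mul, add_mul]; omega
    exact Nat.le_of_mul_le_mul_right h3 (by omega)
  have hSne : S.card ≤ Nat.card G - 1 := by
    have h1 : 1 < n := by
      have := Finset.card_le_univ A
      omega
    have : 1 * h < n * h := Nat.mul_lt_mul_of_pos_right h1 (by omega)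
    omega
  have hκS : kappa 1 S ≤ S.card - 1 := by
    have := hκmin {0} (by simp) (by simpa using hSne)
    simpa using this
  have hSpos := Finset.card_pos.2 ⟨0, h0S⟩
  apply core A (hAdef ▸ Finset.mem_image.2 ⟨0, h0S, map_zero _⟩) _ _ _ hA2 hV
  · rw [← hn]
    by_contra hcon
    have h1 : (n + 2) * h ≤ (2 * A.card) * h := Nat.mul_le_mul_right _ (by omega)
    rw [add_mul, mul_assoc 2] at h1
    omega
  · rw [← hn]; exact hbound
  · rw [← hn]
    intro K hK hKn
    by_contra hcon
    have hne : (kf K).Nonempty := ⟨0, mem_kf.2 K.zero_mem⟩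
    have hb := hbound (kf K) hne hKn
    have heq : (kf K + A).card + 1 = (kf K).card + A.card := by omega
    have hKpos := Finset.card_pos.2 hne
    have hm := hmax (K.comap (QuotientAddGroup.mk' H)) (P (kf K)) (by
      ext g
      rw [Finset.mem_coe, memP, mem_kf]
      exact Iff.rfl) ⟨by rw [cardP]; exact Nat.mul_pos hKpos (by omega), hlt _ hKn, by
        rw [addP, cardP, cardP]
        have : ((kf K + A).card + 1) * h = ((kf K).card + A.card) * h := by rw [heq]
        rw [add_mul, add_mul] at this
        omega⟩
    have hnc : ∀ L : AddSubgroup G, Nat.card L = (kf L).card := by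
      intro L
      exact Nat.subtype_card (kf L) (fun x => mem_kf)
    have hPK : P (kf K) = kf (K.comap (QuotientAddGroup.mk' H)) := by
      ext g
      rw [memP, mem_kf, mem_kf]
      exact Iff.rfl
    rw [hnc, hnc, ← hPK, cardP, ← hh] at hm
    have hK1 : (kf K).card ≤ 1 := by
      by_contra h2
      have : 2 * h ≤ (kf K).card * h := Nat.mul_le_mul_right _ (by omega)
      omega
    apply hK
    rw [AddSubgroup.eq_bot_iff_forall]
    intro x hx
    exact Finset.card_le_one.1 hK1 x (mem_kf.2 hx) 0 (mem_kf.2 K.zero_mem)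
end
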